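/- arXiv:2011.10387 — 10 statements merged into one kernel-verified Lean document; each statement's English description precedes it below -/
import Mathlib

section
/- Define a : ℕ → ℕ by a(0) = 1 and a(i+1) = 10^{a(i)}, and let c = ∑_{i=0}^∞ 10^{-a(i)} (a real number). Let α = 2^c and β = 2. Then α > 1, α and β are multiplicatively independent (i.e., for all integers s, t, if α^s · β^t = 1 then s = 0 and t = 0), and the set {(n, m) ∈ ℕ × ℕ : n ≥ 1, m ≥ 1, |α^n − β^m| ≤ 1} is infinite. -/
theorem stmt_aux_ge (a : ℕ → ℕ) (ha : ∀ i, a (i + 1) = 10 ^ a i) (k j : ℕ) :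
    a k + j ≤ a (k + j) := by
  induction j with
  | zero => simp
  | succ j ih =>
    have h1 : a (k + (j + 1)) = 10 ^ a (k + j) := ha (k + j)
    have h2 : a (k + j) < 10 ^ a (k + j) := Nat.lt_pow_self (by norm_num)
    omega

theorem stmt_aux_term (a : ℕ → ℕ) (ha : ∀ i, a (i + 1) = 10 ^ a i) (k j : ℕ) :
    (10 : ℝ) ^ (-(a (j + k) : ℤ)) ≤ ((10 : ℝ) ^ a k)⁻¹ * (1 / 2) ^ j := by
  have h := stmt_aux_ge a ha k j
  rw [add_comm j k, zpow_neg, zpow_natCast]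
  have h1 : (10 : ℝ) ^ a k * 2 ^ j ≤ 10 ^ a (k + j) := by
    calc (10 : ℝ) ^ a k * 2 ^ j ≤ 10 ^ a k * 10 ^ j := by gcongr; norm_num
      _ = 10 ^ (a k + j) := by rw [pow_add]
      _ ≤ _ := pow_le_pow_right₀ (by norm_num) h
  calc ((10 : ℝ) ^ a (k + j))⁻¹ ≤ ((10 : ℝ) ^ a k * 2 ^ j)⁻¹ := by gcongr
    _ = _ := by rw [mul_inv, one_div, inv_pow]

theorem stmt_aux_summable (a : ℕ → ℕ) (ha : ∀ i, a (i + 1) = 10 ^ a i) (k : ℕ) :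
    Summable (fun j => (10 : ℝ) ^ (-(a (j + k) : ℤ))) :=
  Summable.of_nonneg_of_le (fun _ => by positivity) (stmt_aux_term a ha k)
    (summable_geometric_two.mul_left _)

theorem stmt_aux_tail (a : ℕ → ℕ) (ha : ∀ i, a (i + 1) = 10 ^ a i) (k : ℕ) :
    0 < ∑' j, (10 : ℝ) ^ (-(a (j + k) : ℤ)) ∧
    ∑' j, (10 : ℝ) ^ (-(a (j + k) : ℤ)) ≤ 2 / 10 ^ a k := by
  constructor
  · exact (stmt_aux_summable a ha k).tsum_pos (fun _ => by positivity) 0 (by positivity)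
  · have := (stmt_aux_summable a ha k).tsum_le_tsum (stmt_aux_term a ha k)
      (summable_geometric_two.mul_left _)
    rw [tsum_mul_left, tsum_geometric_two] at this
    rwa [div_eq_inv_mul]

theorem stmt_aux_key (a : ℕ → ℕ) (ha : ∀ i, a (i + 1) = 10 ^ a i)
    (c : ℝ) (hc : c = ∑' i : ℕ, (10 : ℝ) ^ (-(a i : ℤ))) (k : ℕ) :
    ∃ M : ℕ, 1 ≤ M ∧ 0 < (a (k + 1) : ℝ) * c - M ∧
      (a (k + 1) : ℝ) * c - M ≤ 2 * a (k + 1) / 10 ^ a (k + 1) := by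
  obtain ⟨h0, h1⟩ := stmt_aux_tail a ha (k + 1)
  have hs := (stmt_aux_summable a ha 0).sum_add_tsum_nat_add (k + 1)
  simp only [add_zero] at hs
  rw [← hc] at hs
  have hn : (a (k + 1) : ℝ) = 10 ^ a k := by rw [ha]; push_cast; rfl
  have hM : (a (k + 1) : ℝ) * ∑ i ∈ Finset.range (k + 1), (10 : ℝ) ^ (-(a i : ℤ)) =
      ((∑ i ∈ Finset.range (k + 1), 10 ^ (a k - a i) : ℕ) : ℝ) := by
    rw [hn, Finset.mul_sum]
    push_cast
    refine Finset.sum_congr rfl fun i hi => ?_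
    have hi' : i ≤ k := by simpa [Nat.lt_succ_iff] using hi
    have := stmt_aux_ge a ha i (k - i)
    rw [Nat.add_sub_cancel' hi'] at this
    rw [zpow_neg, zpow_natCast, pow_sub₀ _ (by norm_num) (by omega)]
  have hpos : (0 : ℝ) < a (k + 1) := by rw [hn]; positivity
  refine ⟨∑ i ∈ Finset.range (k + 1), 10 ^ (a k - a i), ?_, ?_, ?_⟩
  · rw [Finset.sum_range_succ]; simp
  · rw [← hM, ← hs, mul_add, add_sub_cancel_left]; positivity
  · rw [← hM, ← hs, mul_add, add_sub_cancel_left]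
    calc _ ≤ (a (k + 1) : ℝ) * (2 / 10 ^ a (k + 1)) := by gcongr
      _ = _ := by ring

theorem stmt_0 (a : ℕ → ℕ) (ha0 : a 0 = 1) (ha : ∀ i, a (i + 1) = 10 ^ a i)
    (c : ℝ) (hc : c = ∑' i : ℕ, (10 : ℝ) ^ (-(a i : ℤ)))
    (α β : ℝ) (hα : α = (2 : ℝ) ^ c) (hβ : β = 2) :
    1 < α ∧
    (∀ s t : ℤ, α ^ s * β ^ t = 1 → s = 0 ∧ t = 0) ∧
    {p : ℕ × ℕ | 1 ≤ p.1 ∧ 1 ≤ p.2 ∧ |α ^ p.1 - β ^ p.2| ≤ 1}.Infinite := by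
  obtain ⟨hc0, hc1⟩ := stmt_aux_tail a ha 0
  simp only [add_zero] at hc0 hc1
  rw [← hc] at hc0 hc1
  rw [ha0] at hc1
  have hc2 : c ≤ 1 := by linarith
  have hge : ∀ k, k + 1 ≤ a k := fun k => by
    have := stmt_aux_ge a ha 0 k
    rw [zero_add, ha0] at this; omega
  have hbig : ∀ n : ℕ, 1 ≤ n → (2 : ℝ) ^ n * (2 * n) < 10 ^ n ∧ (n : ℝ) * (2 * n) < 10 ^ n := by
    intro n hn
    have h1 : (n : ℝ) < 2 ^ n := by exact_mod_cast Nat.lt_two_pow_self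
    have h2 : (2 : ℝ) ≤ 2 ^ n := by
      calc (2 : ℝ) = 2 ^ 1 := by norm_num
        _ ≤ 2 ^ n := pow_le_pow_right₀ (by norm_num) hn
    have h3 : (8 : ℝ) ^ n ≤ 10 ^ n := by gcongr; norm_num
    have h4 : (8 : ℝ) ^ n = 2 ^ n * (2 ^ n * 2 ^ n) := by
      rw [← mul_pow, ← mul_pow]; norm_num
    have h5 : (2 : ℝ) ^ n * (2 * n) < 10 ^ n := by
      refine lt_of_lt_of_le ?_ h3
      rw [h4]
      have hn' : (0 : ℝ) ≤ n := by positivity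
      gcongr ?_ * ?_
      calc (2 : ℝ) * n < 2 * 2 ^ n := by gcongr
        _ ≤ _ := by gcongr
    refine ⟨h5, lt_of_le_of_lt ?_ h5⟩
    gcongr
  refine ⟨?_, ?_, ?_⟩
  · rw [hα]; exact Real.one_lt_rpow (by norm_num) hc0
  · intro s t h
    have hst : c * s + t = 0 := by
      rw [hα, hβ, ← Real.rpow_intCast, ← Real.rpow_intCast, ← Real.rpow_mul (by norm_num),
        ← Real.rpow_add (by norm_num)] at h
      have := congrArg Real.log h
      rw [Real.log_rpow (by norm_num), Real.log_one] at this
      exact (mul_eq_zero.mp this).resolve_right (Real.log_pos (by norm_num)).ne'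
    have hs : s = 0 := by
      by_contra hs
      obtain ⟨M, -, h1, h2⟩ := stmt_aux_key a ha c hc s.natAbs
      have hk := hge (s.natAbs + 1)
      set n := a (s.natAbs + 1)
      have hz : ((-t * n - s * M : ℤ) : ℝ) = s * ((n : ℝ) * c - M) := by
        push_cast
        linear_combination (-(n : ℝ)) * hst
      have hne : (-t * n - s * M : ℤ) ≠ 0 := by
        intro h0
        rw [h0, Int.cast_zero] at hz
        have hs' : (s : ℝ) ≠ 0 := by exact_mod_cast hs
        exact (mul_ne_zero hs' h1.ne') hz.symm
      have h3 : (1 : ℝ) ≤ |((-t * n - s * M : ℤ) : ℝ)| := by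
        exact_mod_cast Int.one_le_abs hne
      rw [hz, abs_mul, abs_of_pos h1] at h3
      have hsn : |(s : ℝ)| ≤ n := by
        have : (s.natAbs : ℝ) ≤ n := by exact_mod_cast (by omega : s.natAbs ≤ n)
        rwa [Nat.cast_natAbs, Int.cast_abs] at this
      have h4 : |(s : ℝ)| * ((n : ℝ) * c - M) ≤ n * (2 * n / 10 ^ n) := by gcongr
      have h5 : (n : ℝ) * (2 * n / 10 ^ n) < 1 := by
        rw [← mul_div_assoc, div_lt_one (by positivity)]
        exact (hbig n (by omega)).2
      linarith
    refine ⟨hs, ?_⟩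
    rw [hs] at hst
    simpa using hst
  · choose M hM1 hM2 hM3 using stmt_aux_key a ha c hc
    have hmono : StrictMono a := strictMono_nat_of_lt_succ fun k => by
      have := stmt_aux_ge a ha k 1
      omega
    refine Set.infinite_of_injective_forall_mem (f := fun k => (a (k + 1), M k)) ?_ ?_
    · intro i j hij
      have := hmono.injective (Prod.mk.inj hij).1
      omega
    · intro k
      have hk := hge (k + 1)
      have e1 := hM2 k
      have e2 := hM3 k
      refine ⟨by simp only; omega, hM1 k, ?_⟩
      simp only
      set n := a (k + 1)
      set ε := (n : ℝ) * c - M k with hε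
      have hb := (hbig n (by omega)).1
      have hn0 : (0 : ℝ) < n := by exact_mod_cast (by omega : 0 < n)
      have e3 : (2 : ℝ) ^ n * ε ≤ 1 := by
        calc (2 : ℝ) ^ n * ε ≤ 2 ^ n * (2 * n / 10 ^ n) := by gcongr
          _ ≤ 1 := by
            rw [← mul_div_assoc, div_le_one (by positivity)]
            exact hb.le
      have e4 : ε ≤ 1 := by
        have : (1 : ℝ) ≤ 2 ^ n := one_le_pow₀ (by norm_num)
        nlinarith
      have hMn : M k ≤ n := by
        have : (M k : ℝ) ≤ n := by nlinarith
        exact_mod_cast this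
      have e5 : (2 : ℝ) ^ ε ≤ 1 + ε := by
        have := rpow_one_add_le_one_add_mul_self (s := 1) (by norm_num) e1.le e4
        norm_num at this
        exact this
      have e6 : (1 : ℝ) ≤ 2 ^ ε := Real.one_le_rpow (by norm_num) e1.le
      have e7 : α ^ n = 2 ^ (M k) * (2 : ℝ) ^ ε := by
        rw [hα, ← Real.rpow_natCast, ← Real.rpow_mul (by norm_num), ← Real.rpow_natCast,
          ← Real.rpow_add (by norm_num)]
        congr 1
        rw [hε]; ring
      rw [e7, hβ]
      have e8 : (2 : ℝ) ^ (M k) ≤ 2 ^ n := pow_le_pow_right₀ (by norm_num) hMn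
      have e9 : (0 : ℝ) < 2 ^ (M k) := by positivity
      rw [abs_of_nonneg (by nlinarith)]
      nlinarith
end

section
/- Define a : ℕ → ℕ by a(0) = 1 and a(i+1) = 10^{a(i)}, and let c = ∑_{i=0}^∞ 10^{-a(i)} (a real number). Then for every k ∈ ℕ, |c − ∑_{i=0}^k 10^{-a(i)}| < 2 · 10^{-10^{a(k)}}. -/
theorem stmt_1 (a : ℕ → ℕ) (ha0 : a 0 = 1) (ha : ∀ i, a (i + 1) = 10 ^ a i)
    (c : ℝ) (hc : c = ∑' i : ℕ, (10 : ℝ) ^ (-(a i : ℤ))) (k : ℕ) :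
    |c - ∑ i ∈ Finset.range (k + 1), (10 : ℝ) ^ (-(a i : ℤ))| <
      2 * (10 : ℝ) ^ (-((10 : ℤ) ^ a k)) := by
  have hgrow : ∀ n i, a n + i ≤ a (n + i) := by
    intro n i
    induction i with
    | zero => simp
    | succ i ih =>
      have h1 : a (n + i) < 10 ^ a (n + i) := Nat.lt_pow_self (by norm_num)
      rw [← add_assoc n i 1, ha]
      omega
  have hterm : ∀ m : ℕ, (10 : ℝ) ^ (-(m : ℤ)) = (1 / 10 : ℝ) ^ m := by
    intro m
    rw [zpow_neg, zpow_natCast, one_div, inv_pow]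
  have hlast : (10 : ℝ) ^ (-((10 : ℤ) ^ a k)) = (1 / 10 : ℝ) ^ a (k + 1) := by
    rw [← hterm, ha]
    push_cast
    rfl
  rw [hlast, hc]
  simp only [hterm]
  have hle : ∀ n i, (1 / 10 : ℝ) ^ a (i + n) ≤ (1 / 10 : ℝ) ^ a n * (1 / 10 : ℝ) ^ i := by
    intro n i
    rw [← pow_add, add_comm i n]
    exact pow_le_pow_of_le_one (by norm_num) (by norm_num) (hgrow n i)
  have hgeo : HasSum (fun i : ℕ => (1 / 10 : ℝ) ^ i) (1 - 1 / 10)⁻¹ :=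
    hasSum_geometric_of_lt_one (by norm_num) (by norm_num)
  have hs : Summable (fun i => (1 / 10 : ℝ) ^ a i) :=
    Summable.of_nonneg_of_le (fun i => by positivity) (fun i => hle 0 i)
      (hgeo.mul_left _).summable
  have hs' := (summable_nat_add_iff (k + 1)).2 hs
  have hsplit := hs.sum_add_tsum_nat_add (k + 1)
  have hb := hs'.tsum_le_tsum (hle (k + 1)) (hgeo.mul_left _).summable
  rw [(hgeo.mul_left _).tsum_eq] at hb
  have h0 : 0 ≤ ∑' i, (1 / 10 : ℝ) ^ a (i + (k + 1)) := tsum_nonneg fun i => by positivity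
  have hp : 0 < (1 / 10 : ℝ) ^ a (k + 1) := by positivity
  rw [← hsplit, add_sub_cancel_left, abs_of_nonneg h0]
  norm_num at hb
  linarith
end

section
/- Define a : ℕ → ℕ by a(0) = 1 and a(i+1) = 10^{a(i)}, and let c = ∑_{i=0}^∞ 10^{-a(i)} (a real number). Then c is a Liouville number, i.e., for every n ∈ ℕ there exist integers p and q with q > 1 such that 0 < |c − p/q| < 1/q^n. -/
theorem stmt_2 (a : ℕ → ℕ) (ha0 : a 0 = 1) (ha : ∀ i, a (i + 1) = 10 ^ a i)
    (c : ℝ) (hc : c = ∑' i : ℕ, (10 : ℝ) ^ (-(a i : ℤ))) :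
    ∀ n : ℕ, ∃ p q : ℤ, 1 < q ∧ 0 < |c - p / q| ∧ |c - p / q| < 1 / (q : ℝ) ^ n := by
  intro n
  have hf : ∀ i, (10 : ℝ) ^ (-(a i : ℤ)) = (1 / 10 : ℝ) ^ a i := by
    intro i
    rw [zpow_neg, zpow_natCast, one_div, inv_pow]
  simp_rw [hf] at hc
  have hsucc : ∀ i, a i + 1 ≤ a (i + 1) := by
    intro i
    rw [ha]
    exact Nat.lt_pow_self (by norm_num)
  have hadd : ∀ k i, a k + i ≤ a (i + k) := by
    intro k i
    induction i with
    | zero => simp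
    | succ i ih =>
      have := hsucc (i + k)
      rw [show i + 1 + k = i + k + 1 by ring]
      omega
  have hle : ∀ k i, (1 / 10 : ℝ) ^ a (i + k) ≤ (1 / 10 : ℝ) ^ a k * (1 / 10 : ℝ) ^ i := by
    intro k i
    rw [← pow_add]
    exact pow_le_pow_of_le_one (by norm_num) (by norm_num) (hadd k i)
  have hgeo : Summable (fun i : ℕ => (1 / 10 : ℝ) ^ i) :=
    summable_geometric_of_lt_one (by norm_num) (by norm_num)
  have hsum : ∀ k, Summable (fun i => (1 / 10 : ℝ) ^ a (i + k)) := fun k =>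
    Summable.of_nonneg_of_le (fun i => by positivity) (hle k) (hgeo.mul_left _)
  have hsplit := (hsum 0).sum_add_tsum_nat_add (n + 1)
  simp only [add_zero] at hsplit
  rw [← hc] at hsplit
  set t := ∑' i, (1 / 10 : ℝ) ^ a (i + (n + 1)) with ht
  have htpos : 0 < t := (hsum (n + 1)).tsum_pos (fun i => by positivity) 0 (by positivity)
  have htle : t ≤ (1 / 10 : ℝ) ^ a (n + 1) * (10 / 9) := by
    calc t ≤ ∑' i : ℕ, (1 / 10 : ℝ) ^ a (n + 1) * (1 / 10 : ℝ) ^ i :=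
          (hsum (n + 1)).tsum_le_tsum (hle (n + 1)) (hgeo.mul_left _)
      _ = _ := by
          rw [tsum_mul_left, tsum_geometric_of_lt_one (by norm_num) (by norm_num)]
          norm_num
  have hmono : Monotone a := monotone_nat_of_le_succ fun i => by have := hsucc i; omega
  have han : n + 1 ≤ a n := by
    have := hadd 0 n
    simp only [add_zero] at this
    omega
  have hexp : a n * n + 1 ≤ a (n + 1) := by
    rw [ha]
    have h2 : a n < 2 ^ a n := Nat.lt_pow_self (by norm_num)
    calc a n * n + 1 ≤ a n * a n := by nlinarith
      _ ≤ 2 ^ a n * 2 ^ a n := by gcongr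
      _ = 4 ^ a n := by rw [← mul_pow]; norm_num
      _ ≤ 10 ^ a n := by gcongr; norm_num
  refine ⟨∑ i ∈ Finset.range (n + 1), 10 ^ (a n - a i), 10 ^ a n, ?_, ?_⟩
  · exact one_lt_pow₀ (by norm_num) (by omega)
  · have hp : (((∑ i ∈ Finset.range (n + 1), 10 ^ (a n - a i) : ℤ)) : ℝ) / ((10 ^ a n : ℤ) : ℝ)
        = ∑ i ∈ Finset.range (n + 1), (1 / 10 : ℝ) ^ a i := by
      push_cast
      rw [Finset.sum_div]
      refine Finset.sum_congr rfl fun i hi => ?_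
      have hi' : a i ≤ a n := hmono (by simp at hi; omega)
      rw [div_eq_iff (by positivity), one_div, inv_pow, eq_inv_mul_iff_mul_eq₀ (by positivity),
        ← pow_add]
      congr 1
      omega
    rw [hp, ← hsplit, add_sub_cancel_left, abs_of_pos htpos]
    refine ⟨htpos, htle.trans_lt ?_⟩
    have h1 : (1 / 10 : ℝ) ^ a (n + 1) ≤ (1 / 10 : ℝ) ^ (a n * n + 1) :=
      pow_le_pow_of_le_one (by norm_num) (by norm_num) hexp
    have h3 : 1 / (((10 ^ a n : ℤ) : ℝ)) ^ n = (1 / 10 : ℝ) ^ (a n * n) := by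
      push_cast
      rw [← pow_mul, one_div, one_div, inv_pow]
    rw [h3]
    rw [pow_succ] at h1
    have h4 : 0 < (1 / 10 : ℝ) ^ (a n * n) := by positivity
    linarith
end

section
/- There exist real numbers α and β with α > 1 and β > 1 which are multiplicatively independent (i.e., for all integers s, t, if α^s · β^t = 1 then s = 0 and t = 0) and such that the set {(n, m) ∈ ℕ × ℕ : n ≥ 1, m ≥ 1, |α^n − β^m| ≤ 1} is infinite. -/
theorem stmt_3 :
    ∃ α β : ℝ, 1 < α ∧ 1 < β ∧
      (∀ s t : ℤ, α ^ s * β ^ t = 1 → s = 0 ∧ t = 0) ∧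
      {p : ℕ × ℕ | 1 ≤ p.1 ∧ 1 ≤ p.2 ∧ |α ^ p.1 - β ^ p.2| ≤ 1}.Infinite := by
  let U : ℕ → Set ℝ := fun N => ⋃ (m : ℕ) (_ : N < m) (n : ℤ),
    {x : ℝ | |(2:ℝ) ^ (n : ℝ) - (2:ℝ) ^ (x * m)| < 1}
  have hU : ∀ N, U N ∈ residual ℝ := by
    intro N
    apply residual_of_dense_open
    · refine isOpen_iUnion fun m => isOpen_iUnion fun _ => isOpen_iUnion fun n => ?_
      refine isOpen_lt ?_ continuous_const
      refine (continuous_const.sub ?_).abs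
      exact Continuous.rpow continuous_const (by fun_prop) (fun _ => Or.inl (by norm_num))
    · refine Rat.denseRange_cast.mono ?_
      rintro _ ⟨q, rfl⟩
      simp only [U, Set.mem_iUnion, Set.mem_ofPred_eq]
      refine ⟨q.den * (N + 1), ?_, q.num * (N + 1), ?_⟩
      · have := q.pos
        nlinarith
      · have h : (q : ℝ) * q.den = q.num := by exact_mod_cast Rat.mul_den_eq_num q
        push_cast
        rw [← mul_assoc, h]
        simp
  have hall : (⋂ N, U N) ∩ {x | Irrational x} ∈ residual ℝ :=
    Filter.inter_mem (countable_iInter_mem.2 hU) eventually_residual_irrational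
  obtain ⟨x, hx1, hxU, hxi⟩ :=
    (dense_of_mem_residual hall).inter_open_nonempty (Set.Ioi 1) isOpen_Ioi ⟨2, by norm_num⟩
  have hx1 : 1 < x := hx1
  have hxi : Irrational x := hxi
  have h2 : (0:ℝ) < 2 := by norm_num
  refine ⟨2, 2 ^ x, by norm_num, Real.one_lt_rpow (by norm_num) (by linarith), ?_, ?_⟩
  · intro s t h
    rw [← Real.rpow_intCast, ← Real.rpow_intCast, ← Real.rpow_mul h2.le, ← Real.rpow_add h2] at h
    have h0 : (s : ℝ) + x * t = 0 := by
      have := congrArg Real.log h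
      rw [Real.log_rpow h2, Real.log_one] at this
      exact (mul_eq_zero.1 this).resolve_right (Real.log_pos (by norm_num)).ne'
    have ht : t = 0 := by
      by_contra ht
      have := hxi.mul_intCast ht
      exact this ⟨(-s : ℤ), by push_cast; linarith⟩
    subst ht
    simpa using h0
  · intro hfin
    obtain ⟨N, hN⟩ := (hfin.image Prod.snd).bddAbove
    have hm := Set.mem_iInter.1 hxU N
    simp only [U, Set.mem_iUnion, Set.mem_ofPred_eq] at hm
    obtain ⟨m, hm, n, hn⟩ := hm
    have hm1 : (1:ℝ) ≤ m := by exact_mod_cast (by omega : 1 ≤ m)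
    have hbig : (2:ℝ) < 2 ^ (x * m) := by
      have := Real.rpow_lt_rpow_of_exponent_lt (x := 2) (by norm_num) (show 1 < x * m by nlinarith)
      simpa using this
    have hn1 : 0 < n := by
      by_contra hc
      have : (2:ℝ) ^ (n:ℝ) ≤ 1 :=
        Real.rpow_le_one_of_one_le_of_nonpos (by norm_num) (by exact_mod_cast not_lt.1 hc)
      have := (abs_lt.1 hn).1
      linarith
    lift n to ℕ using hn1.le
    have : m ≤ N := hN ⟨(n, m), ⟨by simp only; omega, by simp only; omega, ?_⟩, rfl⟩
    · omega
    · simp only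
      rw [← Real.rpow_mul_natCast h2.le]
      rw [Int.cast_natCast, Real.rpow_natCast] at hn
      exact hn.le
end

section
/- Define a : ℕ → ℕ by a(0) = 1 and a(i+1) = 10^{a(i)}, let c = ∑_{i=0}^∞ 10^{-a(i)} (a real number), and let α = 2^c. Then the set {(n, m) ∈ ℕ × ℕ : n ≥ 1, m ≥ 1, m < n, |α^n − 2^m| ≤ 4 · (log 2) · n · 2^m / 10^n} is infinite. -/
theorem stmt_4 (a : ℕ → ℕ) (ha0 : a 0 = 1) (ha : ∀ i, a (i + 1) = 10 ^ a i)
    (c : ℝ) (hc : c = ∑' i : ℕ, (10 : ℝ) ^ (-(a i : ℤ)))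
    (α : ℝ) (hα : α = (2 : ℝ) ^ c) :
    {p : ℕ × ℕ | 1 ≤ p.1 ∧ 1 ≤ p.2 ∧ p.2 < p.1 ∧
      |α ^ p.1 - (2 : ℝ) ^ p.2| ≤
        4 * Real.log 2 * p.1 * 2 ^ p.2 / 10 ^ p.1}.Infinite := by
  have hmono : StrictMono a := strictMono_nat_of_lt_succ fun i => by
    rw [ha]; exact Nat.lt_pow_self (by norm_num)
  have hadd : ∀ k i, a k + i ≤ a (i + k) := by
    intro k i
    induction i with
    | zero => simp
    | succ i ih =>
      have : a (i + k) < a (i + 1 + k) := hmono (by omega)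
      omega
  have hterm : ∀ k i, (10 : ℝ) ^ (-(a (i + k) : ℤ)) ≤ (10 : ℝ) ^ (-(a k : ℤ)) * (1 / 10) ^ i := by
    intro k i
    have h1 : (10 : ℝ) ^ (-(a k : ℤ)) * (1 / 10) ^ i = (10 : ℝ) ^ (-((a k + i : ℕ) : ℤ)) := by
      rw [zpow_neg, zpow_neg, zpow_natCast, zpow_natCast, pow_add, mul_inv, one_div, inv_pow]
    rw [h1]
    apply zpow_le_zpow_right₀ (by norm_num)
    have := hadd k i
    omega
  have hgeo : HasSum (fun i : ℕ => (1 / 10 : ℝ) ^ i) (10 / 9) := by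
    have := hasSum_geometric_of_lt_one (r := (1 / 10 : ℝ)) (by norm_num) (by norm_num)
    convert this using 1; norm_num
  have hsumk : ∀ k, Summable (fun i => (10 : ℝ) ^ (-(a (i + k) : ℤ))) := fun k =>
    Summable.of_nonneg_of_le (fun i => by positivity) (hterm k) (hgeo.summable.mul_left _)
  have htail : ∀ k, ∑' i, (10 : ℝ) ^ (-(a (i + k) : ℤ)) ≤ 2 * (10 : ℝ) ^ (-(a k : ℤ)) := by
    intro k
    have h := (hsumk k).tsum_le_tsum (hterm k) (hgeo.summable.mul_left _)
    rw [tsum_mul_left, hgeo.tsum_eq] at h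
    have : (0 : ℝ) < (10 : ℝ) ^ (-(a k : ℤ)) := by positivity
    linarith
  have hc1 : c < 1 := by
    have := htail 0
    simp only [add_zero, ha0] at this
    rw [← hc] at this
    norm_num at this
    linarith
  apply Set.infinite_of_injective_forall_mem
    (f := fun k : ℕ => (a (k + 1), ∑ i ∈ Finset.range (k + 1), 10 ^ (a k - a i)))
  · intro j k h
    have := hmono.injective (Prod.ext_iff.mp h).1
    omega
  intro k
  set n := a (k + 1) with hn
  set m := ∑ i ∈ Finset.range (k + 1), 10 ^ (a k - a i) with hm
  have hn10 : n = 10 ^ a k := ha k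
  have hn1 : 1 ≤ n := by rw [hn10]; exact Nat.one_le_pow _ _ (by norm_num)
  have hm1 : 1 ≤ m := by
    rw [hm, Finset.sum_range_succ]; simp
  set T := ∑' i, (10 : ℝ) ^ (-(a (i + (k + 1)) : ℤ)) with hT
  have hT0 : 0 ≤ T := tsum_nonneg fun i => by positivity
  have hsplit : (n : ℝ) * c = m + n * T := by
    have h := (hsumk 0).sum_add_tsum_nat_add (k + 1)
    simp only [add_zero] at h
    rw [← hc] at h
    rw [← h, mul_add, hm, Finset.mul_sum]
    congr 1
    push_cast
    apply Finset.sum_congr rfl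
    intro i hi
    have hik : a i ≤ a k := hmono.monotone (by simp at hi; omega)
    rw [hn10, pow_sub₀ _ (by norm_num) hik, zpow_neg, zpow_natCast]
    push_cast
    rfl
  have hnR : (0 : ℝ) < n := by exact_mod_cast hn1
  have hmn : m < n := by
    have : (m : ℝ) < n := by nlinarith [mul_nonneg hnR.le hT0]
    exact_mod_cast this
  have hTn : T ≤ 2 / 10 ^ n := by
    have := htail (k + 1)
    rwa [zpow_neg, zpow_natCast, ← div_eq_mul_inv] at this
  have h2n : (2 * n : ℝ) ≤ 10 ^ n := by
    have h1 : n < 5 ^ n := Nat.lt_pow_self (by norm_num)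
    have h2 : 2 ≤ 2 ^ n := by simpa using Nat.pow_le_pow_right (n := 2) (by norm_num) hn1
    have : 2 * n ≤ 10 ^ n := by
      calc 2 * n ≤ 2 ^ n * 5 ^ n := Nat.mul_le_mul h2 h1.le
        _ = 10 ^ n := by rw [← Nat.mul_pow]
    exact_mod_cast this
  have hp : (0 : ℝ) < 10 ^ n := by positivity
  have hnT : n * T ≤ 2 * n / 10 ^ n := by
    calc n * T ≤ n * (2 / 10 ^ n) := by gcongr
      _ = _ := by ring
  have hnT1 : n * T ≤ 1 := hnT.trans ((div_le_one hp).2 h2n)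
  have hl0 : 0 < Real.log 2 := Real.log_pos (by norm_num)
  have hl1 : Real.log 2 ≤ 1 := by linarith [Real.log_two_lt_d9]
  have hnT0 : 0 ≤ n * T := by positivity
  have hpow : α ^ n - (2 : ℝ) ^ m = 2 ^ m * (Real.exp (Real.log 2 * (n * T)) - 1) := by
    rw [hα, ← Real.rpow_natCast ((2 : ℝ) ^ c), ← Real.rpow_mul (by norm_num), mul_comm c, hsplit,
      Real.rpow_add (by norm_num), Real.rpow_natCast, Real.rpow_def_of_pos (by norm_num)]
    ring
  have hx0 : 0 ≤ Real.log 2 * (n * T) := by positivity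
  have hexp := Real.abs_exp_sub_one_le (x := Real.log 2 * (n * T))
    (by rw [abs_of_nonneg hx0]; nlinarith)
  rw [abs_of_nonneg hx0] at hexp
  refine ⟨hn1, hm1, hmn, ?_⟩
  change |α ^ n - (2 : ℝ) ^ m| ≤ 4 * Real.log 2 * n * 2 ^ m / 10 ^ n
  rw [hpow, abs_mul, abs_of_pos (by positivity : (0 : ℝ) < 2 ^ m)]
  calc (2 : ℝ) ^ m * |Real.exp (Real.log 2 * (n * T)) - 1|
      ≤ 2 ^ m * (2 * (Real.log 2 * (n * T))) := by gcongr
    _ ≤ 2 ^ m * (2 * (Real.log 2 * (2 * n / 10 ^ n))) := by gcongr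
    _ = _ := by ring
end

section
/- Let Γ ⊆ ℝ be a Lebesgue null set. Then the set A = {(x, y) ∈ ℝ × ℝ : x > 1, y > 1, and log x / log y ∈ Γ} is a null set in ℝ² with respect to the 2-dimensional Lebesgue measure. -/
open MeasureTheory

theorem stmt_5 (Γ : Set ℝ) (hΓ : volume Γ = 0) :
    volume {p : ℝ × ℝ | 1 < p.1 ∧ 1 < p.2 ∧ Real.log p.1 / Real.log p.2 ∈ Γ} = 0 := by
  have h0 : volume (Γ ×ˢ Set.Ioi (1 : ℝ)) = 0 := by
    rw [Measure.volume_eq_prod, Measure.prod_prod, hΓ, zero_mul]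
  have hd : DifferentiableOn ℝ (fun q : ℝ × ℝ => (Real.exp (q.1 * Real.log q.2), q.2))
      (Γ ×ˢ Set.Ioi (1 : ℝ)) := by
    intro q hq
    have h1 : (1 : ℝ) < q.2 := hq.2
    have h2 : q.2 ≠ 0 := by linarith
    apply DifferentiableAt.differentiableWithinAt
    fun_prop (disch := assumption)
  refine measure_mono_null ?_
    (addHaar_image_eq_zero_of_differentiableOn_of_addHaar_eq_zero volume hd h0)
  rintro ⟨x, y⟩ ⟨hx, hy, h⟩
  refine ⟨(Real.log x / Real.log y, y), ⟨h, hy⟩, ?_⟩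
  have hl : Real.log y ≠ 0 := (Real.log_pos hy).ne'
  have hx' : (0 : ℝ) < x := lt_trans one_pos hx
  simp only [Prod.mk.injEq, and_true]
  rw [div_mul_cancel₀ _ hl, Real.exp_log hx']
end

section
/- Let k, c, d be positive real numbers. Suppose n ∈ ℕ satisfies c · log n ≥ 2 and (n : ℝ) ≥ k² · c² · (d+2)² · e^{d/c} · (log n)². Suppose further that z is a real number with z ≥ 2/k and (n : ℝ) ≤ k·z + c·log n + d. Then (n : ℝ) ≤ k·z + 2·c·log z. -/
theorem stmt_7 (k c d : ℝ) (hk : 0 < k) (hc : 0 < c) (hd : 0 < d) (n : ℕ)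
    (h1 : 2 ≤ c * Real.log n)
    (h2 : k ^ 2 * c ^ 2 * (d + 2) ^ 2 * Real.exp (d / c) * (Real.log n) ^ 2 ≤ (n : ℝ))
    (z : ℝ) (hz : 2 / k ≤ z)
    (h3 : (n : ℝ) ≤ k * z + c * Real.log n + d) :
    (n : ℝ) ≤ k * z + 2 * c * Real.log z := by
  have hn : (0 : ℝ) < n := by
    rcases Nat.eq_zero_or_pos n with h | h
    · subst h
      norm_num at h1
    · exact_mod_cast h
  have hz0 : 0 < z := lt_of_lt_of_le (by positivity) hz
  have hkz : 2 ≤ k * z := by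
    rw [div_le_iff₀ hk] at hz
    linarith
  generalize hL : Real.log n = L at *
  have hE : 0 < Real.exp (d / c) := Real.exp_pos _
  set y := c * L * (d + 2) / 2 with hy
  have hy1 : c * L + d ≤ y := by rw [hy]; nlinarith
  have hy2 : 2 ≤ y := by linarith
  have hny : (n : ℝ) ≤ k * z * y := by nlinarith
  have hsq : (n : ℝ) ^ 2 ≤ (k * z * y) ^ 2 := pow_le_pow_left₀ hn.le hny 2
  have h5 : (n : ℝ) * (n * Real.exp (d / c)) ≤ n * z ^ 2 := by
    calc (n : ℝ) * (n * Real.exp (d / c)) = n ^ 2 * Real.exp (d / c) := by ring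
      _ ≤ (k * z * y) ^ 2 * Real.exp (d / c) := by gcongr
      _ = (k ^ 2 * c ^ 2 * (d + 2) ^ 2 * Real.exp (d / c) * L ^ 2) * z ^ 2 / 4 := by
        rw [hy]; ring
      _ ≤ n * z ^ 2 / 4 := by gcongr
      _ ≤ n * z ^ 2 := by
        have : 0 ≤ (n : ℝ) * z ^ 2 := by positivity
        linarith
  have h6 := le_of_mul_le_mul_left h5 hn
  have h7 := Real.log_le_log (by positivity) h6
  rw [Real.log_mul hn.ne' hE.ne', Real.log_exp, Real.log_pow, hL] at h7
  have h8 := mul_le_mul_of_nonneg_left h7 hc.le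
  rw [mul_add, mul_div_cancel₀ _ hc.ne'] at h8
  push_cast at h8
  linarith
end

section
/- Let S(x) = {(n, m) ∈ ℕ × ℕ : n ≥ 1, m ≥ 1, |e^n + (√5)^n − 7^m − π^m| ≤ x}, where e, √5, 7, π are real numbers and |·| is the real absolute value. Then there exist a constant C > 0 and a real number x₀ > e such that for all real x ≥ x₀ the set S(x) is finite and its cardinality satisfies (log x)²/log 7 − C·log x ≤ #S(x) ≤ (log x)²/log 7 + C·log x·log(log x). -/
open Finset in
/-- polynomial with divided-power coefficients -/
noncomputable def pe (d : ℕ) (a : ℕ → ℤ) (w : ℝ) : ℝ :=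
  ∑ i ∈ Finset.range d, (a i : ℝ) * (w ^ i / (i.factorial : ℝ))

noncomputable def wt (d : ℕ) (a : ℕ → ℤ) : ℝ :=
  ∑ i ∈ Finset.range d, |(a i : ℝ)| * 4 ^ i

noncomputable def kap (j : Fin 3) : ℝ := (j.val : ℝ) / 2

structure St (m : ℕ) (d : Fin 3 → ℕ) (a : Fin 3 → ℕ → ℤ) : Prop where
  supp : ∀ j i, d j ≤ i → a j i = 0
  lead : ∀ j, 0 < d j → a j (d j - 1) ≠ 0
  size : ∑ j, wt (d j) (a j) ≤ 8 ^ m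
  lo : ∀ w : ℝ, 0 ≤ w → 0 ≤ ∑ j, pe (d j) (a j) w * Real.exp (kap j * w)
  hi : ∀ w : ℝ, 0 ≤ w → ∑ j, pe (d j) (a j) w * Real.exp (kap j * w) ≤
    Real.exp w * (w ^ m / (m.factorial : ℝ))

lemma hasDerivAt_dp (i : ℕ) (w : ℝ) :
    HasDerivAt (fun w : ℝ => w ^ (i+1) / ((i+1).factorial : ℝ)) (w ^ i / (i.factorial : ℝ)) w := by
  have h := (hasDerivAt_pow (i+1) w).div_const ((i+1).factorial : ℝ)
  refine h.congr_deriv ?_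
  have : (i.factorial : ℝ) ≠ 0 := by positivity
  rw [Nat.factorial_succ]
  push_cast
  field_simp

lemma pe_succ' (d : ℕ) (a : ℕ → ℤ) (w : ℝ) :
    pe (d+1) a w = ∑ i ∈ Finset.range d, (a (i+1) : ℝ) * (w ^ (i+1) / ((i+1).factorial : ℝ)) + a 0 := by
  unfold pe
  rw [Finset.sum_range_succ']
  simp

lemma pe_zero (d : ℕ) (a : ℕ → ℤ) (h : ∀ i, d ≤ i → a i = 0) : pe d a 0 = a 0 := by
  cases d with
  | zero => simp [pe, h 0 (Nat.zero_le _)]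
  | succ d => rw [pe_succ']; simp

lemma pe_ext (d : ℕ) (a : ℕ → ℤ) (h : ∀ i, d ≤ i → a i = 0) (w : ℝ) : pe (d+1) a w = pe d a w := by
  unfold pe
  rw [Finset.sum_range_succ, h d le_rfl]; simp

lemma pe_deriv_succ (d : ℕ) (a : ℕ → ℤ) (w : ℝ) :
    HasDerivAt (pe (d+1) a) (pe d (fun i => a (i+1)) w) w := by
  have : pe (d+1) a = fun w => ∑ i ∈ Finset.range d, (a (i+1) : ℝ) * (w ^ (i+1) / ((i+1).factorial : ℝ)) + a 0 := by
    funext w; exact pe_succ' d a w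
  rw [this]
  unfold pe
  apply HasDerivAt.add_const
  exact HasDerivAt.fun_sum fun i _ => (hasDerivAt_dp i w).const_mul _

lemma pe_deriv (d : ℕ) (a : ℕ → ℤ) (h : ∀ i, d ≤ i → a i = 0) (w : ℝ) :
    HasDerivAt (pe d a) (pe d (fun i => a (i+1)) w) w := by
  have : pe d a = pe (d+1) a := by funext w; exact (pe_ext d a h w).symm
  rw [this]; exact pe_deriv_succ d a w

/-- solving `P' + δ P = Q` with `u = 1/δ`. -/
lemma solve (d : ℕ) (a : ℕ → ℤ) (h : ∀ i, d ≤ i → a i = 0) (u : ℤ) (hu : |(u : ℝ)| ≤ 2) :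
    ∃ b : ℕ → ℤ, (∀ i, d ≤ i → b i = 0) ∧ (∀ i, b i = u * (a i - b (i+1))) ∧
      wt d b ≤ 4 * wt d a := by
  let b : ℕ → ℤ := fun i => ∑ r ∈ Finset.range d, u * (-u)^r * a (i+r)
  have hb0 : ∀ i, d ≤ i → b i = 0 := fun i hi =>
    Finset.sum_eq_zero fun r _ => by rw [h (i+r) (by omega)]; simp
  have hb : ∀ i, b i = u * (a i - b (i+1)) := by
    intro i
    have e1 : b i = ∑ r ∈ Finset.range (d+1), u * (-u)^r * a (i+r) := by
      rw [Finset.sum_range_succ, h (i+d) (by omega)]; simp [b]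
    rw [e1, Finset.sum_range_succ']
    simp only [b, pow_zero, mul_one, add_zero, mul_sub, Finset.mul_sum]
    rw [add_comm, sub_eq_add_neg, ← Finset.sum_neg_distrib]
    congr 1
    apply Finset.sum_congr rfl
    intro r _
    rw [show i + 1 + r = i + (r+1) by ring]
    ring
  refine ⟨b, hb0, hb, ?_⟩
  have h1 : wt d b ≤ 2 * wt d a + (1/2) * ∑ i ∈ Finset.range d, |(b (i+1) : ℝ)| * 4^(i+1) := by
    unfold wt
    rw [Finset.mul_sum, Finset.mul_sum, ← Finset.sum_add_distrib]
    apply Finset.sum_le_sum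
    intro i _
    have : |(b i : ℝ)| ≤ 2 * (|(a i : ℝ)| + |(b (i+1) : ℝ)|) := by
      rw [hb i]; push_cast; rw [abs_mul]
      gcongr
      exact abs_sub _ _
    have h4 : (0:ℝ) < 4^i := by positivity
    rw [pow_succ]
    nlinarith
  have h2 : ∑ i ∈ Finset.range d, |(b (i+1) : ℝ)| * 4^(i+1) ≤ wt d b := by
    have e : wt d b = ∑ i ∈ Finset.range (d+1), |(b i : ℝ)| * 4^i := by
      rw [Finset.sum_range_succ, hb0 d le_rfl]; simp [wt]
    rw [e, Finset.sum_range_succ']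
    have : 0 ≤ |(b 0 : ℝ)| * 4^0 := by positivity
    linarith
  linarith

lemma mono_aux (f f' : ℝ → ℝ) (κ : ℝ) (hf : ∀ w, HasDerivAt f (f' w) w) (h0 : f 0 = 0)
    (h : ∀ w, 0 ≤ w → 0 ≤ f' w - κ * f w) (w : ℝ) (hw : 0 ≤ w) : 0 ≤ f w := by
  have hd : ∀ w, HasDerivAt (fun w => f w * Real.exp (-κ * w)) ((f' w - κ * f w) * Real.exp (-κ * w)) w := by
    intro w
    have h2 : HasDerivAt (fun w => Real.exp (-κ * w)) (Real.exp (-κ * w) * (-κ)) w := by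
      simpa using ((hasDerivAt_id w).const_mul (-κ)).exp
    exact ((hf w).mul h2).congr_deriv (by ring)
  have hm : MonotoneOn (fun w => f w * Real.exp (-κ * w)) (Set.Ici 0) := by
    apply monotoneOn_of_deriv_nonneg (convex_Ici 0)
    · exact fun w _ => (hd w).continuousAt.continuousWithinAt
    · exact fun w _ => (hd w).differentiableAt.differentiableWithinAt
    · intro w hw
      rw [interior_Ici] at hw
      rw [(hd w).deriv]
      exact mul_nonneg (h w hw.le) (Real.exp_pos _).le
  have := hm (Set.self_mem_Ici) (show w ∈ Set.Ici (0:ℝ) from hw) hw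
  simp only [h0, zero_mul] at this
  exact nonneg_of_mul_nonneg_left this (Real.exp_pos _)

lemma exists_u (j c : Fin 3) (h : j ≠ c) : ∃ u : ℤ, u ≠ 0 ∧ |(u : ℝ)| ≤ 2 ∧
    (u : ℝ) * (kap j - kap c) = 1 := by
  fin_cases j <;> fin_cases c
  · exact (h rfl).elim
  · exact ⟨-2, by norm_num, by norm_num, by simp [kap]; try norm_num⟩
  · exact ⟨-1, by norm_num, by norm_num, by simp [kap]; try norm_num⟩
  · exact ⟨2, by norm_num, by norm_num, by simp [kap]; try norm_num⟩
  · exact (h rfl).elim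
  · exact ⟨-2, by norm_num, by norm_num, by simp [kap]; try norm_num⟩
  · exact ⟨1, by norm_num, by norm_num, by simp [kap]; try norm_num⟩
  · exact ⟨2, by norm_num, by norm_num, by simp [kap]; try norm_num⟩
  · exact (h rfl).elim

lemma step (m : ℕ) (d : Fin 3 → ℕ) (a : Fin 3 → ℕ → ℤ) (H : St m d a) (c : Fin 3) (hc : 0 < d c) :
    ∃ a', St (m+1) (Function.update d c (d c + 1)) a' := by
  have key : ∀ j, ∃ b : ℕ → ℤ, j ≠ c → ((∀ i, d j ≤ i → b i = 0) ∧
      (∀ i, (b (i+1) : ℝ) + (kap j - kap c) * b i = a j i) ∧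
      wt (d j) b ≤ 4 * wt (d j) (a j) ∧ (0 < d j → b (d j - 1) ≠ 0)) := by
    intro j
    by_cases hj : j = c
    · exact ⟨0, fun h => absurd hj h⟩
    · obtain ⟨u, hu0, hu, hu1⟩ := exists_u j c hj
      obtain ⟨b, h1, h2, h3⟩ := solve (d j) (a j) (H.supp j) u hu
      refine ⟨b, fun _ => ⟨h1, ?_, h3, ?_⟩⟩
      · intro i
        have : (b i : ℝ) = u * (a j i - b (i+1)) := by exact_mod_cast h2 i
        rw [this]
        linear_combination ((a j i : ℝ) - b (i+1)) * hu1
      · intro hd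
        rw [h2, Nat.sub_add_cancel hd, h1 _ le_rfl, sub_zero]
        exact mul_ne_zero hu0 (H.lead j hd)
  choose b hb using key
  let S : ℤ := ∑ j ∈ Finset.univ.erase c, b j 0
  let a' : Fin 3 → ℕ → ℤ := fun j => if j = c then (fun i => Nat.casesOn i (-S) (fun i => a c i)) else b j
  have ac0 : a' c 0 = -S := by simp [a']
  have acs : ∀ i, a' c (i+1) = a c i := fun i => by simp [a']
  have aj : ∀ j, j ≠ c → a' j = b j := fun j hj => by simp [a', hj]
  set d' := Function.update d c (d c + 1) with hd'
  have dc : d' c = d c + 1 := by simp [hd']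
  have dj : ∀ j, j ≠ c → d' j = d j := fun j hj => by simp [hd', hj]
  have hsupp : ∀ j i, d' j ≤ i → a' j i = 0 := by
    intro j i hi
    by_cases hj : j = c
    · subst hj
      rw [dc] at hi
      obtain ⟨i, rfl⟩ : ∃ k, i = k + 1 := ⟨i-1, by omega⟩
      rw [acs]; exact H.supp _ _ (by omega)
    · rw [dj j hj] at hi; rw [aj j hj]; exact (hb j hj).1 i hi
  have hlead : ∀ j, 0 < d' j → a' j (d' j - 1) ≠ 0 := by
    intro j hj0
    by_cases hj : j = c
    · subst hj
      rw [dc, Nat.add_sub_cancel]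
      rw [← Nat.sub_add_cancel hc, acs]
      exact H.lead _ hc
    · rw [dj j hj] at hj0 ⊢; rw [aj j hj]; exact (hb j hj).2.2.2 hj0
  have hsum : ∀ f : Fin 3 → ℝ, ∑ j, f j = f c + ∑ j ∈ Finset.univ.erase c, f j :=
    fun f => (Finset.add_sum_erase _ _ (Finset.mem_univ c)).symm
  have hne : ∀ j ∈ Finset.univ.erase c, j ≠ c := fun j hj => (Finset.mem_erase.mp hj).1
  have hwtc : wt (d' c) (a' c) ≤ 4 * wt (d c) (a c) + ∑ j ∈ Finset.univ.erase c, wt (d j) (b j) := by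
    have e : wt (d' c) (a' c) = 4 * wt (d c) (a c) + |(S:ℝ)| := by
      rw [dc]; unfold wt
      rw [Finset.sum_range_succ', Finset.mul_sum]
      simp only [acs, ac0]
      simp only [Int.cast_neg, abs_neg, pow_zero, mul_one]
      congr 1
      apply Finset.sum_congr rfl; intro i _; ring
    rw [e]
    gcongr
    simp only [S, Int.cast_sum]
    refine (Finset.abs_sum_le_sum_abs _ _).trans (Finset.sum_le_sum fun j hj => ?_)
    have hbj := (hb j (hne j hj)).1
    rcases Nat.eq_zero_or_pos (d j) with h | h
    · rw [hbj 0 (by omega)]; simp [wt, h]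
    · have := Finset.single_le_sum (f := fun i => |(b j i : ℝ)| * 4^i) (s := Finset.range (d j))
        (fun i _ => by positivity) (Finset.mem_range.mpr h)
      simpa [wt] using this
  have hsize : ∑ j, wt (d' j) (a' j) ≤ 8 ^ (m+1) := by
    have h1 := H.size
    rw [hsum] at h1 ⊢
    have e : ∑ j ∈ Finset.univ.erase c, wt (d' j) (a' j) = ∑ j ∈ Finset.univ.erase c, wt (d j) (b j) :=
      Finset.sum_congr rfl fun j hj => by rw [dj j (hne j hj), aj j (hne j hj)]
    have e2 : ∑ j ∈ Finset.univ.erase c, wt (d j) (b j) ≤ 4 * ∑ j ∈ Finset.univ.erase c, wt (d j) (a j) := by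
      rw [Finset.mul_sum]
      exact Finset.sum_le_sum fun j hj => (hb j (hne j hj)).2.2.1
    have e3 : 0 ≤ wt (d c) (a c) := Finset.sum_nonneg fun i _ => by positivity
    rw [e, pow_succ]
    linarith
  let R : ℝ → ℝ := fun w => ∑ j, pe (d j) (a j) w * Real.exp (kap j * w)
  let R' : ℝ → ℝ := fun w => ∑ j, pe (d' j) (a' j) w * Real.exp (kap j * w)
  have hpe : ∀ j w, HasDerivAt (pe (d' j) (a' j)) (pe (d j) (a j) w + (kap c - kap j) * pe (d' j) (a' j) w) w := by
    intro j w
    by_cases hj : j = c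
    · subst hj
      rw [dc, sub_self, zero_mul, add_zero]
      refine (pe_deriv_succ (d j) (a' j) w).congr_deriv ?_
      congr 1; funext i; exact acs i
    · rw [dj j hj, aj j hj]
      refine (pe_deriv (d j) (b j) (hb j hj).1 w).congr_deriv ?_
      unfold pe
      rw [Finset.mul_sum, ← Finset.sum_add_distrib]
      apply Finset.sum_congr rfl
      intro i _
      rw [← (hb j hj).2.1 i]; ring
  have hR' : ∀ w, HasDerivAt R' (R w + kap c * R' w) w := by
    intro w
    have : ∀ j ∈ Finset.univ, HasDerivAt (fun w => pe (d' j) (a' j) w * Real.exp (kap j * w))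
        ((pe (d j) (a j) w + kap c * pe (d' j) (a' j) w) * Real.exp (kap j * w)) w := by
      intro j _
      have h2 : HasDerivAt (fun w => Real.exp (kap j * w)) (Real.exp (kap j * w) * (kap j)) w := by
        simpa using ((hasDerivAt_id w).const_mul (kap j)).exp
      exact ((hpe j w).mul h2).congr_deriv (by ring)
    refine (HasDerivAt.fun_sum this).congr_deriv ?_
    simp only [R, R', Finset.mul_sum]
    rw [← Finset.sum_add_distrib]
    apply Finset.sum_congr rfl; intro j _; ring
  have hR0 : R' 0 = 0 := by
    simp only [R', mul_zero, Real.exp_zero, mul_one]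
    rw [hsum, pe_zero _ _ (hsupp c), ac0]
    have : ∑ j ∈ Finset.univ.erase c, pe (d' j) (a' j) 0 = S := by
      simp only [S, Int.cast_sum]
      exact Finset.sum_congr rfl fun j hj => by rw [pe_zero _ _ (hsupp j), aj j (hne j hj)]
    rw [this]; push_cast; ring
  have hlo : ∀ w, 0 ≤ w → 0 ≤ R' w := by
    apply mono_aux R' _ (kap c) hR' hR0
    intro w hw
    have := H.lo w hw
    simpa [R] using this
  have hhi : ∀ w, 0 ≤ w → 0 ≤ Real.exp w * (w^(m+1) / ((m+1).factorial : ℝ)) - R' w := by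
    apply mono_aux (fun w => Real.exp w * (w^(m+1) / ((m+1).factorial : ℝ)) - R' w) _ (kap c)
      (fun w => ((Real.hasDerivAt_exp w).mul (hasDerivAt_dp m w)).sub (hR' w))
    · simp [hR0]
    · intro w hw
      have h1 : R w ≤ _ := H.hi w hw
      have hk : kap c ≤ 1 := by
        fin_cases c <;> simp [kap]
        norm_num
      have h2 : 0 ≤ Real.exp w * (w^(m+1) / ((m+1).factorial : ℝ)) := by positivity
      nlinarith
  exact ⟨a', hsupp, hlead, hsize, hlo, fun w hw => by linarith [hhi w hw]⟩

lemma base : St 2 ![1,1,1] ![fun i => if i = 0 then 2 else 0, fun i => if i = 0 then -4 else 0,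
    fun i => if i = 0 then 2 else 0] := by
  have hval : ∀ w : ℝ, ∑ j, pe ((![1,1,1] : Fin 3 → ℕ) j) ((![fun i => if i = 0 then 2 else 0,
      fun i => if i = 0 then -4 else 0, fun i => if i = 0 then 2 else 0] : Fin 3 → ℕ → ℤ) j) w *
      Real.exp (kap j * w) = 2 * (Real.exp (w/2) - 1)^2 := by
    intro w
    have : Real.exp (2/2 * w) = Real.exp (w/2) * Real.exp (w/2) := by
      rw [← Real.exp_add]; ring_nf
    simp only [Fin.sum_univ_three, pe, kap]
    simp
    simp only [div_self, ne_eq, OfNat.ofNat_ne_zero, not_false_eq_true, one_mul] at this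
    rw [this, show (2:ℝ)⁻¹ * w = w/2 by ring]
    ring
  refine ⟨?_, ?_, ?_, ?_, ?_⟩
  · intro j i hi
    fin_cases j <;> simp at hi ⊢ <;> omega
  · intro j _
    fin_cases j <;> simp
  · simp [Fin.sum_univ_three, wt]; norm_num
  · intro w _; rw [hval]; positivity
  · intro w hw
    rw [hval]
    have h1 := Real.add_one_le_exp (-(w/2))
    have h2 : Real.exp w = Real.exp (w/2) * Real.exp (w/2) := by
      rw [← Real.exp_add]; ring_nf
    have h3 : Real.exp (w/2) * Real.exp (-(w/2)) = 1 := by rw [← Real.exp_add]; simp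
    have h4 : 0 ≤ Real.exp (w/2) - 1 := by linarith [Real.add_one_le_exp (w/2)]
    have h5 : Real.exp (w/2) - 1 ≤ Real.exp (w/2) * (w/2) := by
      nlinarith [Real.exp_pos (w/2)]
    have h6 := pow_le_pow_left₀ h4 h5 2
    rw [h2]
    simp only [Nat.factorial]
    push_cast
    nlinarith

lemma stages (K : ℕ) : ∃ a b c : Fin 3 → ℕ → ℤ, St (3*K+2) ![K+1,K+1,K+1] a ∧
    St (3*K+3) ![K+2,K+1,K+1] b ∧ St (3*K+4) ![K+2,K+2,K+1] c := by
  have hB : ∀ a, St (3*K+2) ![K+1,K+1,K+1] a → ∃ b, St (3*K+3) ![K+2,K+1,K+1] b := by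
    intro a ha
    obtain ⟨b, hb⟩ := step _ _ _ ha 0 (by simp)
    refine ⟨b, ?_⟩
    convert hb using 1
    funext j; fin_cases j <;> simp
  have hC : ∀ a, St (3*K+3) ![K+2,K+1,K+1] a → ∃ b, St (3*K+4) ![K+2,K+2,K+1] b := by
    intro a ha
    obtain ⟨b, hb⟩ := step _ _ _ ha 1 (by simp)
    refine ⟨b, ?_⟩
    convert hb using 1
    funext j; fin_cases j <;> simp
  have hA : ∃ a, St (3*K+2) ![K+1,K+1,K+1] a := by
    clear hB hC
    induction K with
    | zero => exact ⟨_, base⟩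
    | succ K ih =>
      obtain ⟨a, ha⟩ := ih
      obtain ⟨b, hb⟩ := step _ _ _ ha 0 (by simp)
      obtain ⟨c, hc⟩ := step _ _ _ hb 1 (by simp)
      obtain ⟨e, he⟩ := step _ _ _ hc 2 (by simp [Function.update])
      refine ⟨e, ?_⟩
      convert he using 1
      · ring
      funext j; fin_cases j <;> simp [Function.update]
  obtain ⟨a, ha⟩ := hA
  obtain ⟨b, hb⟩ := hB a ha
  obtain ⟨c, hc⟩ := hC b hb
  exact ⟨a, b, c, ha, hb, hc⟩

open Polynomial in
noncomputable def pp (d : ℕ) (a : ℕ → ℤ) : ℝ[X] :=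
  ∑ i ∈ Finset.range d, C ((a i : ℝ) / (i.factorial : ℝ)) * X ^ i

open Polynomial in
lemma pp_eval (d : ℕ) (a : ℕ → ℤ) (w : ℝ) : (pp d a).eval w = pe d a w := by
  unfold pp pe
  rw [eval_finsetSum]
  apply Finset.sum_congr rfl
  intro i _
  simp; ring

open Polynomial in
lemma pp_deg (d : ℕ) (a : ℕ → ℤ) : (pp (d+1) a).natDegree ≤ d := by
  unfold pp
  apply natDegree_sum_le_of_forall_le
  intro i hi
  exact (natDegree_C_mul_X_pow_le _ _).trans (by have := Finset.mem_range.mp hi; omega)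

open Polynomial in
lemma pp_coeff (d : ℕ) (a : ℕ → ℤ) : (pp (d+1) a).coeff d = (a d : ℝ) / (d.factorial : ℝ) := by
  unfold pp
  rw [finsetSum_coeff, Finset.sum_eq_single d]
  · simp
  · intro i _ hi
    rw [coeff_C_mul_X_pow, if_neg (Ne.symm hi)]
  · simp

open Polynomial in
lemma dvd_of_bound (m : ℕ) : ∀ (p : ℝ[X]) (C : ℝ), (∀ w : ℝ, 0 < w → w ≤ 1 → |p.eval w| ≤ C * w ^ m) →
    X ^ m ∣ p := by
  induction m with
  | zero => intro p C _; simp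
  | succ m ih =>
    intro p C h
    have h0 : p.eval 0 = 0 := by
      have t1 : Filter.Tendsto (fun w : ℝ => |p.eval w|) (nhdsWithin 0 (Set.Ioi 0)) (nhds |p.eval 0|) :=
        ((p.continuous.abs).tendsto 0).mono_left nhdsWithin_le_nhds
      have t2 : Filter.Tendsto (fun w : ℝ => C * w^(m+1)) (nhdsWithin 0 (Set.Ioi 0)) (nhds (C * 0^(m+1))) :=
        ((continuous_const.mul (continuous_pow (m+1))).tendsto 0).mono_left nhdsWithin_le_nhds
      have := le_of_tendsto_of_tendsto t1 t2 (by
        filter_upwards [Ioo_mem_nhdsGT (show (0:ℝ) < 1 by norm_num)] with w hw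
        exact h w hw.1 hw.2.le)
      simpa using this
    obtain ⟨p1, rfl⟩ : X ∣ p := by
      rw [X_dvd_iff, coeff_zero_eq_eval_zero]; exact h0
    obtain ⟨r, hr⟩ := ih p1 C (by
      intro w hw hw1
      have := h w hw hw1
      rw [eval_mul, eval_X, abs_mul, abs_of_pos hw, pow_succ] at this
      nlinarith)
    exact ⟨r, by rw [hr]; ring⟩

lemma poly_bdd (p : Polynomial ℝ) : ∃ B : ℝ, 0 ≤ B ∧ ∀ w : ℝ, 0 < w → w ≤ 1 → |p.eval w| ≤ B := by
  obtain ⟨B, hB⟩ := (isCompact_Icc (a := (0:ℝ)) (b := 1)).exists_bound_of_continuousOn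
    (p.continuous.continuousOn)
  refine ⟨B, ?_, fun w h0 h1 => hB w ⟨h0.le, h1⟩⟩
  exact (norm_nonneg _).trans (hB 0 (by simp))

noncomputable def FF (d : Fin 3 → ℕ) (a : Fin 3 → ℕ → ℤ) (w : ℝ) : ℝ :=
  ∑ j : Fin 3, pe (d j) (a j) w * 7 ^ (j.val)

open Polynomial in
lemma nonvanish (K : ℕ) (a b c : Fin 3 → ℕ → ℤ) (ha : St (3*K+2) ![K+1,K+1,K+1] a)
    (hb : St (3*K+3) ![K+2,K+1,K+1] b) (hc : St (3*K+4) ![K+2,K+2,K+1] c) (w : ℝ) (hw : w ≠ 0)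
    (h1 : FF ![K+1,K+1,K+1] a w = 0) (h2 : FF ![K+2,K+1,K+1] b w = 0)
    (h3 : FF ![K+2,K+2,K+1] c w = 0) : False := by
  set A0 := pp (K+1) (a 0) with hA0
  set A1 := pp (K+1) (a 1) with hA1
  set A2 := pp (K+1) (a 2) with hA2
  set B0 := pp (K+2) (b 0) with hB0
  set B1 := pp (K+1) (b 1) with hB1
  set B2 := pp (K+1) (b 2) with hB2
  set C0 := pp (K+2) (c 0) with hC0
  set C1 := pp (K+2) (c 1) with hC1
  set C2 := pp (K+1) (c 2) with hC2
  set D := A0 * (B1 * C2 - B2 * C1) - A1 * (B0 * C2 - B2 * C0) + A2 * (B0 * C1 - B1 * C0) with hD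
  have ident : ∀ w x : ℝ, D.eval w =
      (A0.eval w + A1.eval w * x + A2.eval w * x^2) * (B1 * C2 - B2 * C1).eval w
      - (B0.eval w + B1.eval w * x + B2.eval w * x^2) * (A1 * C2 - A2 * C1).eval w
      + (C0.eval w + C1.eval w * x + C2.eval w * x^2) * (A1 * B2 - A2 * B1).eval w := by
    intro w x
    simp only [hD, eval_add, eval_sub, eval_mul]
    ring
  have hDw : D.eval w = 0 := by
    rw [ident w 7]
    simp only [FF, Fin.sum_univ_three] at h1 h2 h3
    simp at h1 h2 h3
    simp only [← pp_eval] at h1 h2 h3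
    rw [h1, h2, h3]; ring
  -- vanishing order
  have hk : ∀ w : ℝ, Real.exp (kap 2 * w) = Real.exp (kap 1 * w) ^ 2 := by
    intro w; rw [← Real.exp_nat_mul]; simp [kap]
  have hdvd : X ^ (3*K+2) ∣ D := by
    obtain ⟨M1, p1, q1⟩ := poly_bdd (B1 * C2 - B2 * C1)
    obtain ⟨M2, p2, q2⟩ := poly_bdd (A1 * C2 - A2 * C1)
    obtain ⟨M3, p3, q3⟩ := poly_bdd (A1 * B2 - A2 * B1)
    apply dvd_of_bound (3*K+2) D (Real.exp 1 * M1 + Real.exp 1 * M2 + Real.exp 1 * M3)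
    intro w hw0 hw1
    have bnd : ∀ (m : ℕ) (R : ℝ), 3*K+2 ≤ m → 0 ≤ R → R ≤ Real.exp w * (w^m / (m.factorial : ℝ)) →
        |R| ≤ Real.exp 1 * w^(3*K+2) := by
      intro m R hm h0 h1
      rw [abs_of_nonneg h0]
      refine h1.trans ?_
      have e1 : w^m / (m.factorial : ℝ) ≤ w^m := by
        apply div_le_self (by positivity)
        exact_mod_cast Nat.one_le_iff_ne_zero.mpr (Nat.factorial_ne_zero m)
      have e2 : w^m ≤ w^(3*K+2) := pow_le_pow_of_le_one hw0.le hw1 hm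
      exact mul_le_mul (Real.exp_le_exp.mpr hw1) (e1.trans e2) (by positivity) (by positivity)
    have ra := bnd _ _ (by omega) (ha.lo w hw0.le) (ha.hi w hw0.le)
    have rb := bnd _ _ (by omega) (hb.lo w hw0.le) (hb.hi w hw0.le)
    have rc := bnd _ _ (by omega) (hc.lo w hw0.le) (hc.hi w hw0.le)
    simp only [Fin.sum_univ_three, hk] at ra rb rc
    have k0 : Real.exp (kap 0 * w) = 1 := by simp [kap]
    simp [k0, ← pp_eval] at ra rb rc
    rw [ident w (Real.exp (kap 1 * w))]
    refine (abs_add_le _ _).trans ?_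
    refine (add_le_add_left (abs_sub _ _) _).trans ?_
    rw [abs_mul, abs_mul, abs_mul]
    have z1 := mul_le_mul ra (q1 w hw0 hw1) (abs_nonneg _) (by positivity)
    have z2 := mul_le_mul rb (q2 w hw0 hw1) (abs_nonneg _) (by positivity)
    have z3 := mul_le_mul rc (q3 w hw0 hw1) (abs_nonneg _) (by positivity)
    refine (add_le_add (add_le_add z1 z2) z3).trans (le_of_eq ?_)
    ring
  -- degrees
  have dA0 : A0.natDegree ≤ K := pp_deg _ _
  have dA1 : A1.natDegree ≤ K := pp_deg _ _
  have dA2 : A2.natDegree ≤ K := pp_deg _ _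
  have dB0 : B0.natDegree ≤ K+1 := pp_deg _ _
  have dB1 : B1.natDegree ≤ K := pp_deg _ _
  have dB2 : B2.natDegree ≤ K := pp_deg _ _
  have dC0 : C0.natDegree ≤ K+1 := pp_deg _ _
  have dC1 : C1.natDegree ≤ K+1 := pp_deg _ _
  have dC2 : C2.natDegree ≤ K := pp_deg _ _
  have m3 : ∀ (p q r : ℝ[X]) (x y z : ℕ), p.natDegree ≤ x → q.natDegree ≤ y → r.natDegree ≤ z →
      (p * (q * r)).natDegree ≤ x + (y + z) := fun p q r x y z hp hq hr =>
    natDegree_mul_le_of_le hp (natDegree_mul_le_of_le hq hr)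
  have hs : ∀ (p q : ℝ[X]) (n : ℕ), p.natDegree ≤ n → q.natDegree ≤ n → (p - q).natDegree ≤ n :=
    fun p q n hp hq => (natDegree_sub_le _ _).trans (max_le hp hq)
  set E := A0 * (B1 * C2) - A0 * (B2 * C1) - A1 * (B0 * C2) + A1 * (B2 * C0) - A2 * (B1 * C0) with hE
  have hDE : D = E + A2 * (B0 * C1) := by rw [hD, hE]; ring
  have dE : E.natDegree ≤ 3*K+1 := by
    rw [hE]
    refine hs _ _ _ (natDegree_add_le_of_degree_le (hs _ _ _
      (hs _ _ _ ?_ ?_) ?_) ?_) ?_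
    · exact (m3 _ _ _ _ _ _ dA0 dB1 dC2).trans (by omega)
    · exact (m3 _ _ _ _ _ _ dA0 dB2 dC1).trans (by omega)
    · exact (m3 _ _ _ _ _ _ dA1 dB0 dC2).trans (by omega)
    · exact (m3 _ _ _ _ _ _ dA1 dB2 dC0).trans (by omega)
    · exact (m3 _ _ _ _ _ _ dA2 dB1 dC0).trans (by omega)
  have hcoeff : D.coeff (3*K+2) = A2.coeff K * (B0.coeff (K+1) * C1.coeff (K+1)) := by
    rw [hDE, coeff_add, coeff_eq_zero_of_natDegree_lt (by omega : E.natDegree < 3*K+2), zero_add,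
      show 3*K+2 = K + ((K+1)+(K+1)) by ring,
      coeff_mul_add_eq_of_natDegree_le dA2 (natDegree_mul_le_of_le dB0 dC1),
      coeff_mul_add_eq_of_natDegree_le dB0 dC1]
  have hcne : D.coeff (3*K+2) ≠ 0 := by
    rw [hcoeff, hA2, hB0, hC1, pp_coeff, pp_coeff, pp_coeff]
    have l1 : a 2 K ≠ 0 := by simpa using ha.lead 2 (by simp)
    have l2 : b 0 (K+1) ≠ 0 := by simpa using hb.lead 0 (by simp)
    have l3 : c 1 (K+1) ≠ 0 := by simpa using hc.lead 1 (by simp)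
    have l1' : (a 2 K : ℝ) ≠ 0 := by exact_mod_cast l1
    have l2' : (b 0 (K+1) : ℝ) ≠ 0 := by exact_mod_cast l2
    have l3' : (c 1 (K+1) : ℝ) ≠ 0 := by exact_mod_cast l3
    positivity
  have dD : D.natDegree ≤ 3*K+2 := by
    rw [hDE]
    exact natDegree_add_le_of_degree_le (dE.trans (by omega)) ((m3 _ _ _ _ _ _ dA2 dB0 dC1).trans (by omega))
  obtain ⟨Q, hQ⟩ := hdvd
  have hQ0 : Q ≠ 0 := by rintro rfl; rw [hQ] at hcne; simp at hcne
  have dQ : Q.natDegree = 0 := by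
    have : D.natDegree = 3*K+2 + Q.natDegree := by
      rw [hQ, natDegree_mul (by simp) hQ0, natDegree_X_pow]
    omega
  rw [eq_C_of_natDegree_eq_zero dQ] at hQ hQ0
  rw [hQ] at hDw
  simp only [eval_mul, eval_pow, eval_X, eval_C, mul_eq_zero] at hDw
  rcases hDw with h | h
  · exact pow_ne_zero _ hw h
  · rw [h] at hQ0; simp at hQ0

lemma FF_int (D : ℕ) (d : Fin 3 → ℕ) (a : Fin 3 → ℕ → ℤ) (hd : ∀ j, d j ≤ D + 1) (n m : ℕ) (hm : 1 ≤ m) :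
    ∃ z : ℤ, FF d a (2 * n / m) * ((m:ℝ)^D * (D.factorial : ℝ)) = z := by
  have hm0 : (m:ℝ) ≠ 0 := by positivity
  have key : ∀ i, i ≤ D → ∃ z : ℤ, ((2 * n / m : ℝ)^i / (i.factorial : ℝ)) * ((m:ℝ)^D * (D.factorial : ℝ)) = z := by
    intro i hi
    obtain ⟨k, hk⟩ := Nat.factorial_dvd_factorial hi
    refine ⟨((2*n)^i * m^(D-i) * k : ℕ), ?_⟩
    have e : (m:ℝ)^D = m^i * m^(D-i) := by rw [← pow_add]; congr 1; omega
    have hf : (i.factorial : ℝ) ≠ 0 := by positivity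
    rw [hk, e, div_pow]
    push_cast
    field_simp
  have : ∀ j : Fin 3, ∃ z : ℤ, pe (d j) (a j) (2 * n / m) * 7 ^ (j.val) * ((m:ℝ)^D * (D.factorial : ℝ)) = z := by
    intro j
    have : ∀ i, ∃ z : ℤ, i ∈ Finset.range (d j) → (a j i : ℝ) * ((2 * n / m : ℝ)^i / (i.factorial : ℝ)) * ((m:ℝ)^D * (D.factorial : ℝ)) = z := by
      intro i
      by_cases hi : i ∈ Finset.range (d j)
      · obtain ⟨z, hz⟩ := key i (by have := Finset.mem_range.mp hi; have := hd j; omega)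
        refine ⟨a j i * z, fun _ => ?_⟩
        rw [mul_assoc, hz]; push_cast; rfl
      · exact ⟨0, fun h => absurd h hi⟩
    choose z hz using this
    refine ⟨(∑ i ∈ Finset.range (d j), z i) * 7^(j.val), ?_⟩
    rw [mul_right_comm]
    push_cast
    congr 1
    unfold pe
    rw [Finset.sum_mul]
    exact Finset.sum_congr rfl hz
  choose z hz using this
  refine ⟨∑ j, z j, ?_⟩
  unfold FF
  rw [Finset.sum_mul]
  push_cast
  exact Finset.sum_congr rfl fun j _ => hz j

lemma FF_diff (d : Fin 3 → ℕ) (a : Fin 3 → ℕ → ℤ) (w l : ℝ) (hw : 0 ≤ w) (hw4 : w ≤ 4)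
    (hl : 0 ≤ l) (hl4 : l ≤ 4) :
    |FF d a w - FF d a l| ≤ 49 * (∑ j, wt (d j) (a j)) * |w - l| := by
  have key : ∀ i : ℕ, |w^i / (i.factorial : ℝ) - l^i / (i.factorial : ℝ)| ≤ |w - l| * 4^i := by
    intro i
    rw [← sub_div, abs_div, abs_of_pos (by positivity : (0:ℝ) < (i.factorial : ℝ)), div_le_iff₀ (by positivity)]
    refine (abs_pow_sub_pow_le w l i).trans ?_
    have h1 : max |w| |l| ^ (i-1) ≤ 4^i := by
      have : max |w| |l| ≤ 4 := by rw [abs_of_nonneg hw, abs_of_nonneg hl]; exact max_le hw4 hl4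
      calc max |w| |l| ^ (i-1) ≤ 4^(i-1) := pow_le_pow_left₀ (by positivity) this _
        _ ≤ 4^i := pow_le_pow_right₀ (by norm_num) (by omega)
    have h2 : (i:ℝ) ≤ (i.factorial : ℝ) := by exact_mod_cast Nat.self_le_factorial i
    calc |w - l| * i * max |w| |l| ^ (i-1) ≤ |w - l| * (i.factorial : ℝ) * 4^i := by gcongr
      _ = _ := by ring
  unfold FF
  rw [← Finset.sum_sub_distrib]
  refine (Finset.abs_sum_le_sum_abs _ _).trans ?_
  rw [Finset.mul_sum, Finset.sum_mul]
  apply Finset.sum_le_sum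
  intro j _
  rw [← sub_mul, abs_mul]
  have h7 : |(7:ℝ)^(j.val)| ≤ 49 := by
    fin_cases j <;> norm_num
  have hp : |pe (d j) (a j) w - pe (d j) (a j) l| ≤ wt (d j) (a j) * |w - l| := by
    unfold pe wt
    rw [← Finset.sum_sub_distrib, Finset.sum_mul]
    refine (Finset.abs_sum_le_sum_abs _ _).trans (Finset.sum_le_sum fun i _ => ?_)
    rw [← mul_sub, abs_mul]
    calc _ ≤ |(a j i : ℝ)| * (|w - l| * 4^i) := by gcongr; exact key i
      _ = _ := by ring
  calc _ ≤ (wt (d j) (a j) * |w - l|) * 49 := by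
        apply mul_le_mul hp h7 (abs_nonneg _) ((abs_nonneg _).trans hp)
    _ = _ := by ring

lemma log7_lt : 2 * Real.log 7 < 4 := by
  have : Real.log 7 < 2 := by
    rw [Real.log_lt_iff_lt_exp (by norm_num)]
    have h := Real.exp_one_gt_d9
    have : Real.exp 2 = Real.exp 1 * Real.exp 1 := by rw [← Real.exp_add]; norm_num
    rw [this]; nlinarith
  linarith

lemma FF_small (m : ℕ) (d : Fin 3 → ℕ) (a : Fin 3 → ℕ → ℤ) (H : St m d a) :
    |FF d a (2 * Real.log 7)| ≤ 49 * (4^m / (m.factorial : ℝ)) := by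
  have hl : 0 ≤ 2 * Real.log 7 := by have := Real.log_nonneg (show (1:ℝ) ≤ 7 by norm_num); linarith
  have e : FF d a (2 * Real.log 7) = ∑ j, pe (d j) (a j) (2 * Real.log 7) * Real.exp (kap j * (2 * Real.log 7)) := by
    unfold FF
    apply Finset.sum_congr rfl
    intro j _
    congr 1
    rw [show kap j * (2 * Real.log 7) = (j.val : ℝ) * Real.log 7 by unfold kap; ring,
      Real.exp_nat_mul, Real.exp_log (by norm_num)]
  rw [e, abs_of_nonneg (H.lo _ hl)]
  refine (H.hi _ hl).trans ?_
  have e49 : Real.exp (2 * Real.log 7) = 49 := by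
    have := Real.exp_nat_mul (Real.log 7) 2
    rw [Real.exp_log (by norm_num)] at this
    push_cast at this; rw [this]; norm_num
  rw [e49]
  gcongr
  exact log7_lt.le

lemma four_pow_div (M K : ℕ) (h : 3*K+2 ≤ M) (h' : M ≤ 3*K+4) :
    (4:ℝ)^M / (M.factorial : ℝ) ≤ 4^(3*K+4) / ((3*K+2).factorial : ℝ) := by
  have : ((3*K+2).factorial : ℝ) ≤ (M.factorial : ℝ) := by exact_mod_cast Nat.factorial_le h
  have h2 : (4:ℝ)^M ≤ 4^(3*K+4) := pow_le_pow_right₀ (by norm_num) h'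
  gcongr

lemma dioph1 (K n m : ℕ) (hm : 1 ≤ m) (hn : 1 ≤ n) (h4 : (2 * n / m : ℝ) ≤ 4) :
    1 ≤ (49 * 8^(3*K+4) * |(2 * n / m : ℝ) - 2 * Real.log 7| + 49 * (4^(3*K+4) / ((3*K+2).factorial : ℝ)))
      * ((m:ℝ)^(K+1) * ((K+1).factorial : ℝ)) := by
  have main : ∀ (M : ℕ) (d : Fin 3 → ℕ) (a : Fin 3 → ℕ → ℤ), St M d a → 3*K+2 ≤ M → M ≤ 3*K+4 →
      (∀ j, d j ≤ K+1+1) → FF d a (2 * n / m) ≠ 0 →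
      1 ≤ (49 * 8^(3*K+4) * |(2 * n / m : ℝ) - 2 * Real.log 7| + 49 * (4^(3*K+4) / ((3*K+2).factorial : ℝ)))
      * ((m:ℝ)^(K+1) * ((K+1).factorial : ℝ)) := by
    intro M d a H hM hM' hd hne
    obtain ⟨z, hz⟩ := FF_int (K+1) d a hd n m hm
    have hpos : (0:ℝ) < (m:ℝ)^(K+1) * ((K+1).factorial : ℝ) := by positivity
    have hz0 : z ≠ 0 := by
      rintro rfl
      have := mul_ne_zero hne hpos.ne'
      rw [hz] at this; simp at this
    have h1 : (1:ℝ) ≤ |(z:ℝ)| := by exact_mod_cast Int.one_le_abs hz0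
    rw [← hz, abs_mul, abs_of_pos hpos] at h1
    refine h1.trans ?_
    gcongr
    have hl : 0 ≤ 2 * Real.log 7 := by have := Real.log_nonneg (show (1:ℝ) ≤ 7 by norm_num); linarith
    have h2 := FF_diff d a (2 * n / m) (2 * Real.log 7) (by positivity) h4 hl log7_lt.le
    have h3 := FF_small M d a H
    have h5 : ∑ j, wt (d j) (a j) ≤ 8^(3*K+4) := H.size.trans (pow_le_pow_right₀ (by norm_num) hM')
    have h6 : |FF d a (2 * n / m)| ≤ |FF d a (2 * n / m) - FF d a (2 * Real.log 7)| + |FF d a (2 * Real.log 7)| := by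
      have := abs_add_le (FF d a (2 * n / m) - FF d a (2 * Real.log 7)) (FF d a (2 * Real.log 7))
      simpa using this
    refine h6.trans (add_le_add (h2.trans ?_) (h3.trans ?_))
    · gcongr
    · gcongr 49 * ?_
      exact four_pow_div M K hM hM'
  obtain ⟨a, b, c, ha, hb, hc⟩ := stages K
  by_contra hcon
  have hw : (2 * n / m : ℝ) ≠ 0 := by positivity
  apply nonvanish K a b c ha hb hc (2 * n / m) hw
  · by_contra h
    exact hcon (main _ _ _ ha (by omega) (by omega) (by intro j; fin_cases j <;> simp) h)
  · by_contra h
    exact hcon (main _ _ _ hb (by omega) (by omega) (by intro j; fin_cases j <;> simp) h)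
  · by_contra h
    exact hcon (main _ _ _ hc (by omega) (by omega) (by intro j; fin_cases j <;> simp) h)

lemma arith1 (K m : ℕ) (hK : 47 ≤ K) (h : 2304 * m ≤ (K+1)^2) :
    2 * (49 * (4:ℝ)^(3*K+4)) * ((m:ℝ)^(K+1) * ((K+1).factorial : ℝ)) ≤ ((3*K+2).factorial : ℝ) := by
  obtain ⟨L, hL⟩ : ∃ L, L = K+1 := ⟨_, rfl⟩
  rw [← hL] at h ⊢
  have hLr : (48:ℝ) ≤ L := by exact_mod_cast (by omega : 48 ≤ L)
  have hf3 : ((3*L).factorial : ℝ) = 3 * L * ((3*K+2).factorial : ℝ) := by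
    rw [show 3*L = 3*K+2+1 by omega, Nat.factorial_succ]; push_cast; rw [hL]; push_cast; ring
  have hcube : ((L.factorial:ℝ))^3 ≤ ((3*L).factorial : ℝ) := by
    have h1 := Nat.le_of_dvd (Nat.factorial_pos _) (Nat.factorial_mul_factorial_dvd_factorial_add L L)
    have h2 := Nat.le_of_dvd (Nat.factorial_pos _) (Nat.factorial_mul_factorial_dvd_factorial_add (L+L) L)
    have h3 : L.factorial^3 ≤ (3*L).factorial := by
      rw [show 3*L = L+L+L by ring]
      calc L.factorial^3 = (L.factorial * L.factorial) * L.factorial := by ring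
        _ ≤ (L+L).factorial * L.factorial := by gcongr
        _ ≤ _ := h2
    exact_mod_cast h3
  set F : ℝ := (L.factorial : ℝ) with hF
  have hFpos : 0 < F := by positivity
  have hlow : (L:ℝ)^L ≤ F * 3^L := by
    have h1 := Real.pow_div_factorial_le_exp (L:ℝ) (by positivity) L
    have h2 : Real.exp L ≤ 3^L := by
      have : Real.exp (L:ℝ) = Real.exp 1 ^ L := by rw [← Real.exp_nat_mul]; simp
      rw [this]
      exact pow_le_pow_left₀ (Real.exp_pos _).le (by linarith [Real.exp_one_lt_d9]) _
    rw [div_le_iff₀ (by positivity)] at h1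
    calc _ ≤ Real.exp L * F := h1
      _ ≤ 3^L * F := by gcongr
      _ = _ := by ring
  have hsq : (256:ℝ)^L * m^L ≤ F^2 := by
    have h1 : ((2304:ℝ) * m)^L ≤ ((L:ℝ)^2)^L := by
      apply pow_le_pow_left₀ (by positivity)
      exact_mod_cast h
    have h2 : ((L:ℝ)^2)^L ≤ F^2 * 9^L := by
      calc ((L:ℝ)^2)^L = ((L:ℝ)^L)^2 := by rw [← pow_mul, ← pow_mul, mul_comm]
        _ ≤ (F * 3^L)^2 := by gcongr
        _ = F^2 * 9^L := by rw [mul_pow, ← pow_mul, mul_comm L 2, pow_mul]; norm_num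
    have h3 : ((2304:ℝ) * m)^L = (256^L * m^L) * 9^L := by
      rw [← mul_pow, ← mul_pow]; congr 1; ring
    rw [h3] at h1
    exact le_of_mul_le_mul_right (h1.trans h2) (by positivity)
  have h4L : 1176 * (L:ℝ) ≤ 4^L := by
    have h1 : (L:ℝ) ≤ 2^L := by exact_mod_cast Nat.lt_two_pow_self.le
    have h2 : (1176:ℝ) ≤ 2^L := by
      calc (1176:ℝ) ≤ 2^48 := by norm_num
        _ ≤ 2^L := pow_le_pow_right₀ (by norm_num) (by omega)
    calc 1176 * (L:ℝ) ≤ 2^L * 2^L := by gcongr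
      _ = 4^L := by rw [← mul_pow]; norm_num
  have e1 : (4:ℝ)^(3*K+4) = 4 * 64^L := by
    rw [show 3*K+4 = 1 + 3*L by omega, pow_add, pow_mul]; norm_num
  have e2 : (256:ℝ)^L = 4^L * 64^L := by rw [← mul_pow]; norm_num
  rw [e1]
  have : 3 * (L:ℝ) * (2 * (49 * (4 * 64^L)) * ((m:ℝ)^L * F)) ≤ 3 * L * ((3*K+2).factorial : ℝ) := by
    rw [← hf3]
    refine le_trans ?_ hcube
    calc 3 * (L:ℝ) * (2 * (49 * (4 * 64^L)) * ((m:ℝ)^L * F)) = (1176 * L) * 64^L * m^L * F := by ring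
      _ ≤ 4^L * 64^L * m^L * F := by gcongr
      _ = 256^L * m^L * F := by rw [e2]
      _ ≤ F^2 * F := by gcongr
      _ = F^3 := by ring
  exact le_of_mul_le_mul_left this (by positivity)

lemma dioph2 (n m : ℕ) (hm : 1 ≤ m) (hn : 1 ≤ n) (h4 : (2 * n / m : ℝ) ≤ 4) (L : ℕ)
    (hL : L = 48 * (Nat.sqrt m + 1)) :
    1 ≤ 196 * 8^(3*L+1) * ((m:ℝ)^L * (L.factorial : ℝ)) * |(n:ℝ) - m * Real.log 7| := by
  obtain ⟨K, hK⟩ : ∃ K, L = K + 1 := ⟨L-1, by omega⟩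
  have h1 := dioph1 K n m hm hn h4
  have h2 := arith1 K m (by omega) (by
    rw [← hK, hL]
    have := (Nat.lt_succ_sqrt m).le
    simp only [Nat.succ_eq_add_one] at this
    nlinarith)
  rw [show 3*K+4 = 3*L+1 by omega, ← hK] at h1 h2
  set G : ℝ := ((m:ℝ)^L * (L.factorial : ℝ)) with hG
  have hGpos : 0 < G := by positivity
  have hfp : (0:ℝ) < ((3*K+2).factorial : ℝ) := by positivity
  have h3 : 49 * (4^(3*L+1) / ((3*K+2).factorial : ℝ)) * G ≤ 1/2 := by
    rw [mul_div_assoc', div_mul_eq_mul_div, div_le_iff₀ hfp]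
    linarith
  have h5 : |(2 * n / m : ℝ) - 2 * Real.log 7| ≤ 2 * |(n:ℝ) - m * Real.log 7| := by
    have hm1 : (1:ℝ) ≤ m := by exact_mod_cast hm
    have : (2 * n / m : ℝ) - 2 * Real.log 7 = 2 * ((n:ℝ) - m * Real.log 7) / m := by field_simp
    rw [this, abs_div, abs_mul, abs_of_pos (by linarith : (0:ℝ) < m), abs_of_pos (by norm_num : (0:ℝ) < 2)]
    exact div_le_self (by positivity) hm1
  have h6 : 1/2 ≤ 49 * 8^(3*L+1) * |(2 * n / m : ℝ) - 2 * Real.log 7| * G := by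
    linarith
  have h7 : 49 * 8^(3*L+1) * |(2 * n / m : ℝ) - 2 * Real.log 7| * G ≤
      49 * 8^(3*L+1) * (2 * |(n:ℝ) - m * Real.log 7|) * G := by gcongr
  linarith

lemma dioph3 (n m : ℕ) (hm : 30000^4 ≤ m) (hn : 1 ≤ n) (h4 : (2 * n / m : ℝ) ≤ 4) :
    Real.exp (-(m:ℝ)/12) ≤ |(n:ℝ) - m * Real.log 7| := by
  obtain ⟨L, hL⟩ : ∃ L, L = 48 * (Nat.sqrt m + 1) := ⟨_, rfl⟩
  have h := dioph2 n m (by omega) hn h4 L hL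
  set t : ℝ := Real.sqrt (Real.sqrt m) with ht
  have ht2 : t^2 = Real.sqrt m := Real.sq_sqrt (Real.sqrt_nonneg _)
  have ht4 : t^4 = m := by
    rw [show t^4 = (t^2)^2 by ring, ht2, Real.sq_sqrt (by positivity)]
  have htbig : 30000 ≤ t := by
    apply Real.le_sqrt_of_sq_le
    apply Real.le_sqrt_of_sq_le
    have : ((30000^4 : ℕ) : ℝ) ≤ m := by exact_mod_cast hm
    push_cast at this
    linarith
  have hLt : (L:ℝ) ≤ 96 * t^2 := by
    have : ((Nat.sqrt m : ℕ) : ℝ) ≤ t^2 := by rw [ht2]; exact Real.nat_sqrt_le_real_sqrt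
    rw [hL]; push_cast
    nlinarith
  have e1 := Real.add_one_le_exp (1:ℝ)
  have e2 : ∀ (k : ℕ), (2.7:ℝ)^k ≤ Real.exp k := by
    intro k
    have : Real.exp (k:ℝ) = Real.exp 1 ^ k := by rw [← Real.exp_nat_mul]; simp
    rw [this]
    exact pow_le_pow_left₀ (by norm_num) (by linarith [Real.exp_one_gt_d9]) _
  have e6 : (196:ℝ) ≤ Real.exp 6 := by
    have := e2 6; norm_num at this ⊢; linarith
  have e3 : (8:ℝ) ≤ Real.exp 3 := by
    have := e2 3; norm_num at this ⊢; linarith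
  have e5 : (96:ℝ) ≤ Real.exp 5 := by
    have := e2 5; norm_num at this ⊢; linarith
  have et : t ≤ Real.exp t := by linarith [Real.add_one_le_exp t]
  have b1 : (8:ℝ)^(3*L+1) ≤ Real.exp (9*L+3) := by
    calc (8:ℝ)^(3*L+1) ≤ Real.exp 3 ^ (3*L+1) := pow_le_pow_left₀ (by norm_num) e3 _
      _ = Real.exp (9*L+3) := by rw [← Real.exp_nat_mul]; congr 1; push_cast; ring
  have b2 : (m:ℝ)^L ≤ Real.exp (4*L*t) := by
    calc (m:ℝ)^L = t^(4*L) := by rw [← ht4, ← pow_mul]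
      _ ≤ Real.exp t ^ (4*L) := pow_le_pow_left₀ (by linarith) et _
      _ = _ := by rw [← Real.exp_nat_mul]; congr 1; push_cast; ring
  have b3 : (L.factorial : ℝ) ≤ Real.exp (L*(5+2*t)) := by
    have f1 : (L.factorial : ℝ) ≤ (L:ℝ)^L := by exact_mod_cast Nat.factorial_le_pow L
    have f2 : (L:ℝ) ≤ Real.exp (5+2*t) := by
      calc (L:ℝ) ≤ 96 * t^2 := hLt
        _ ≤ Real.exp 5 * Real.exp t ^ 2 := by gcongr
        _ = _ := by rw [← Real.exp_nat_mul, ← Real.exp_add]; norm_num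
    calc _ ≤ (L:ℝ)^L := f1
      _ ≤ Real.exp (5+2*t) ^ L := pow_le_pow_left₀ (by positivity) f2 _
      _ = _ := by rw [← Real.exp_nat_mul]
  have hall : 196 * 8^(3*L+1) * ((m:ℝ)^L * (L.factorial : ℝ)) ≤ Real.exp ((m:ℝ)/12) := by
    calc 196 * 8^(3*L+1) * ((m:ℝ)^L * (L.factorial : ℝ))
        ≤ Real.exp 6 * Real.exp (9*L+3) * (Real.exp (4*L*t) * Real.exp (L*(5+2*t))) := by gcongr
      _ = Real.exp (6 + (9*L+3) + (4*L*t + L*(5+2*t))) := by simp only [Real.exp_add]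
      _ ≤ Real.exp ((m:ℝ)/12) := by
        apply Real.exp_le_exp.mpr
        rw [← ht4]
        have hL0 : (0:ℝ) ≤ L := by positivity
        have g1 : 6 + (9*L+3) + (4*L*t + L*(5+2*t)) ≤ 9 + 20 * (L * t) := by nlinarith
        have g2 : (L:ℝ) * t ≤ 96 * t^2 * t := by gcongr
        have g3 : 30000 * t^3 ≤ t^4 := by
          have : 0 ≤ t^3 := by positivity
          nlinarith
        have g4 : 1 ≤ t^3 := one_le_pow₀ (by linarith)
        nlinarith
  have : 1 ≤ Real.exp ((m:ℝ)/12) * |(n:ℝ) - m * Real.log 7| :=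
    h.trans (by gcongr)
  rw [neg_div, Real.exp_neg]
  rw [inv_le_iff_one_le_mul₀ (Real.exp_pos _)]
  linarith

lemma exp_nat_eq (m : ℕ) : (7:ℝ)^m = Real.exp (m * Real.log 7) := by
  rw [Real.exp_nat_mul, Real.exp_log (by norm_num)]

lemma log7_ge : 1 ≤ Real.log 7 := by
  rw [Real.le_log_iff_exp_le (by norm_num)]
  linarith [Real.exp_one_lt_d9]

lemma sqrt5_le : Real.sqrt 5 ≤ Real.exp (5/6) := by
  have h : (Real.sqrt 5)^6 ≤ (Real.exp (5/6))^6 := by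
    have e1 : (Real.sqrt 5)^6 = 125 := by
      rw [show (Real.sqrt 5)^6 = ((Real.sqrt 5)^2)^3 by ring, Real.sq_sqrt (by norm_num)]; norm_num
    have e2 : (Real.exp (5/6))^6 = Real.exp 1 ^ 5 := by
      rw [← Real.exp_nat_mul, ← Real.exp_nat_mul]; norm_num
    rw [e1, e2]
    calc (125:ℝ) ≤ 2.7^5 := by norm_num
      _ ≤ _ := pow_le_pow_left₀ (by norm_num) (by linarith [Real.exp_one_gt_d9]) _
  exact le_of_pow_le_pow_left₀ (by norm_num) (Real.exp_pos _).le h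

lemma pi_pow_le (m : ℕ) : Real.pi ^ m ≤ 7^m :=
  pow_le_pow_left₀ Real.pi_pos.le (by linarith [Real.pi_lt_four]) _

lemma sqrt5_pow_le (n : ℕ) : Real.sqrt 5 ^ n ≤ Real.exp n := by
  have : Real.exp (n:ℝ) = Real.exp 1 ^ n := by rw [← Real.exp_nat_mul]; simp
  rw [this]
  exact pow_le_pow_left₀ (Real.sqrt_nonneg _) (sqrt5_le.trans (Real.exp_le_exp.mpr (by norm_num))) _

lemma key_bound (x : ℝ) (n m : ℕ) (hn : 1 ≤ n) (hm : 30000^4 ≤ m)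
    (h : |Real.exp n + Real.sqrt 5 ^ n - 7 ^ m - Real.pi ^ m| ≤ x) : Real.exp m < x := by
  by_contra hx
  push Not at hx
  have hmr : (30000:ℝ)^4 ≤ m := by exact_mod_cast hm
  obtain ⟨hl, hu⟩ := abs_le.mp h
  set r : ℝ := Real.exp (-(m:ℝ)/6) with hr
  have hs : (0:ℝ) < 7^m := by positivity
  have h56 : 5/6 ≤ Real.exp (-(1/6)) := by
    have := Real.add_one_le_exp (-(1/6):ℝ); linarith
  have hrm : r = Real.exp (-(1/6)) ^ m := by
    rw [← Real.exp_nat_mul, hr]; congr 1; ring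
  have hpow : ∀ y : ℝ, 0 ≤ y → y ≤ 4 → y^m ≤ 7^m * r := by
    intro y h0 h4
    rw [hrm, ← mul_pow]
    exact pow_le_pow_left₀ h0 (by linarith) _
  have hpi := hpow Real.pi Real.pi_pos.le Real.pi_lt_four.le
  have hxr : x ≤ 7^m * r := by
    have : Real.exp (m:ℝ) = Real.exp 1 ^ m := by rw [← Real.exp_nat_mul]; simp
    rw [this] at hx
    exact hx.trans (hpow _ (Real.exp_pos _).le (by linarith [Real.exp_one_lt_d9]))
  have hr1 : r ≤ 1 := by
    rw [hr]; apply Real.exp_le_one_iff.mpr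
    have : (0:ℝ) ≤ m := by positivity
    linarith
  have h5pos : 0 ≤ Real.sqrt 5 ^ n := by positivity
  have hpipos : 0 ≤ Real.pi ^ m := by positivity
  have hE : Real.exp n ≤ 3 * 7^m := by nlinarith
  -- n ≤ m log 7 + log 3
  have hnlog : (n:ℝ) ≤ m * Real.log 7 + Real.log 3 := by
    rw [exp_nat_eq, ← Real.exp_log (show (0:ℝ) < 3 by norm_num), ← Real.exp_add] at hE
    have := Real.exp_le_exp.mp hE
    linarith
  have h5 : Real.sqrt 5 ^ n ≤ 3 * (7^m * r) := by
    calc Real.sqrt 5 ^ n ≤ Real.exp (5/6) ^ n := pow_le_pow_left₀ (Real.sqrt_nonneg _) sqrt5_le _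
      _ = Real.exp (n * (5/6)) := by rw [← Real.exp_nat_mul]
      _ ≤ Real.exp (Real.log 3 + (m * Real.log 7 + -(m:ℝ)/6)) := by
        apply Real.exp_le_exp.mpr
        have h3 : 0 ≤ Real.log 3 := Real.log_nonneg (by norm_num)
        have h7 := log7_ge
        have : (m:ℝ) ≤ m * Real.log 7 := by
          have : (0:ℝ) ≤ m := by positivity
          nlinarith
        linarith
      _ = 3 * (7^m * r) := by
        rw [Real.exp_add, Real.exp_add, Real.exp_log (by norm_num), ← exp_nat_eq]
  have hdiff : |Real.exp n - 7^m| ≤ 5 * (7^m * r) := by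
    rw [abs_le]; constructor <;> linarith
  set y : ℝ := (n:ℝ) - m * Real.log 7 with hy
  have hey : Real.exp n = 7^m * Real.exp y := by
    rw [exp_nat_eq, ← Real.exp_add]; congr 1; rw [hy]; ring
  have hy1 : |Real.exp y - 1| ≤ 5 * r := by
    rw [hey, show (7:ℝ)^m * Real.exp y - 7^m = 7^m * (Real.exp y - 1) by ring, abs_mul, abs_of_pos hs] at hdiff
    have : (7:ℝ)^m * |Real.exp y - 1| ≤ 7^m * (5 * r) := by linarith
    exact le_of_mul_le_mul_left this hs
  have hrsq : r = Real.exp (-(m:ℝ)/12) ^ 2 := by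
    rw [hr, ← Real.exp_nat_mul]; congr 1; push_cast; ring
  set g : ℝ := Real.exp (-(m:ℝ)/12) with hg
  have hgpos : 0 < g := Real.exp_pos _
  have hgsmall : g < 1/11 := by
    have e : g = (Real.exp ((m:ℝ)/12))⁻¹ := by rw [hg, neg_div, Real.exp_neg]
    rw [e, inv_lt_comm₀ (Real.exp_pos _) (by norm_num)]
    have := Real.add_one_le_exp ((m:ℝ)/12)
    have hmr2 : (1000:ℝ) ≤ m := le_trans (by norm_num) hmr
    norm_num
    linarith
  have hy2 : |y| ≤ 2 * |Real.exp y - 1| := by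
    have hhalf : |Real.exp y - 1| ≤ 1/2 := by
      refine hy1.trans ?_; rw [hrsq]; nlinarith
    rcases le_total 0 y with h0 | h0
    · have := Real.add_one_le_exp y
      rw [abs_of_nonneg h0, abs_of_nonneg (by linarith)]; linarith
    · have hle : Real.exp y ≤ 1 := Real.exp_le_one_iff.mpr h0
      rw [abs_of_nonpos (by linarith : Real.exp y - 1 ≤ 0)] at hhalf ⊢
      rw [abs_of_nonpos h0]
      have h1 := Real.add_one_le_exp (-y)
      have h2 : Real.exp y * Real.exp (-y) = 1 := by rw [← Real.exp_add]; simp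
      have h3 : Real.exp (-y) ≤ 2 := by nlinarith [Real.exp_pos (-y)]
      nlinarith [Real.exp_pos (-y)]
  have h2n : (2 * n / m : ℝ) ≤ 4 := by
    have hmpos : (0:ℝ) < m := lt_of_lt_of_le (by norm_num) hmr
    rw [div_le_iff₀ hmpos]
    have : Real.exp n ≤ Real.exp (2*m) := by
      refine hE.trans ?_
      have e1 : (7.29:ℝ)^m ≤ Real.exp (2*m) := by
        have : Real.exp (2*(m:ℝ)) = (Real.exp 1 ^ 2) ^ m := by
          rw [← Real.exp_nat_mul, ← Real.exp_nat_mul]; congr 1; push_cast; ring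
        rw [this]
        apply pow_le_pow_left₀ (by norm_num)
        nlinarith [Real.exp_one_gt_d9]
      refine le_trans ?_ e1
      have e2 := one_add_mul_le_pow (show (-2:ℝ) ≤ 0.04 by norm_num) m
      have e3 : (3:ℝ) ≤ (1+0.04)^m := by
        refine le_trans ?_ e2
        have hmr2 : (1000:ℝ) ≤ m := le_trans (by norm_num) hmr
        linarith
      calc 3 * (7:ℝ)^m ≤ (1+0.04)^m * 7^m := by gcongr
        _ = 7.28^m := by rw [← mul_pow]; norm_num
        _ ≤ 7.29^m := pow_le_pow_left₀ (by norm_num) (by norm_num) _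
    have := Real.exp_le_exp.mp this
    linarith
  have hd := dioph3 n m hm hn h2n
  have : g ≤ 10 * g^2 := by rw [← hrsq]; linarith
  nlinarith

abbrev SS (x : ℝ) : Set (ℕ × ℕ) := {q : ℕ × ℕ | 1 ≤ q.1 ∧ 1 ≤ q.2 ∧
        |Real.exp q.1 + Real.sqrt 5 ^ q.1 - 7 ^ q.2 - Real.pi ^ q.2| ≤ x}

noncomputable def upF (l : ℝ) : Finset (ℕ × ℕ) :=
  (Finset.Icc 1 ⌊l + 3⌋₊ ×ˢ Finset.Icc 1 ⌊l / Real.log 7 + 1⌋₊) ∪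
  (Finset.Icc 1 ⌊l⌋₊ ×ˢ Finset.range 4).image
    (fun q : ℕ × ℕ => (⌈(q.1:ℝ) * Real.log 7 - 1⌉₊ + q.2, q.1))

lemma SS_sub (x l : ℝ) (hl : (30000:ℝ)^4 ≤ l) (hx : x = Real.exp l) : SS x ⊆ (upF l : Set (ℕ × ℕ)) := by
  rintro ⟨n, m⟩ ⟨hn, hm, h⟩
  simp only at hn hm h
  have hml : (m:ℝ) < l := by
    by_contra hcon
    push Not at hcon
    have h1 : 30000^4 ≤ m := by exact_mod_cast hl.trans hcon
    have := key_bound x n m hn h1 h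
    rw [hx] at this
    have := Real.exp_lt_exp.mp this
    linarith
  obtain ⟨h1, h2⟩ := abs_le.mp h
  have h7 := log7_ge
  have hpi := pi_pow_le m
  have hsq := sqrt5_pow_le n
  have h5pos : 0 ≤ Real.sqrt 5 ^ n := by positivity
  have hpipos : 0 ≤ Real.pi ^ m := by positivity
  have hxpos : 0 < x := by rw [hx]; exact Real.exp_pos _
  have he3 : (15:ℝ) ≤ Real.exp 3 := by
    have : Real.exp 3 = Real.exp 1 ^ 3 := by rw [← Real.exp_nat_mul]; norm_num
    rw [this]
    calc (15:ℝ) ≤ 2.7^3 := by norm_num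
      _ ≤ _ := pow_le_pow_left₀ (by norm_num) (by linarith [Real.exp_one_gt_d9]) _
  have he2 : (3:ℝ) ≤ Real.exp 2 := by
    have := Real.add_one_le_exp (2:ℝ); linarith
  rw [Finset.mem_coe]
  unfold upF
  rw [Finset.mem_union]
  by_cases hA : (m:ℝ) ≤ l / Real.log 7 + 1
  · left
    rw [Finset.mem_product, Finset.mem_Icc, Finset.mem_Icc]
    refine ⟨⟨hn, Nat.le_floor ?_⟩, hm, Nat.le_floor hA⟩
    have h7m : (7:ℝ)^m ≤ 7 * x := by
      have : (m:ℝ) * Real.log 7 ≤ l + Real.log 7 := by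
        calc (m:ℝ) * Real.log 7 ≤ (l / Real.log 7 + 1) * Real.log 7 := by gcongr
          _ = l + Real.log 7 := by field_simp
      rw [exp_nat_eq]
      calc _ ≤ Real.exp (l + Real.log 7) := Real.exp_le_exp.mpr this
        _ = 7 * x := by rw [Real.exp_add, Real.exp_log (by norm_num), hx]; ring
    have : Real.exp n ≤ Real.exp (l + 3) := by
      rw [Real.exp_add, ← hx]
      nlinarith
    simpa using Real.exp_le_exp.mp this
  · right
    push Not at hA
    have hx7 : 7 * x ≤ 7^m := by
      have : l + Real.log 7 ≤ (m:ℝ) * Real.log 7 := by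
        calc l + Real.log 7 = (l / Real.log 7 + 1) * Real.log 7 := by field_simp
          _ ≤ (m:ℝ) * Real.log 7 := by gcongr
      rw [exp_nat_eq]
      calc 7 * x = Real.exp (l + Real.log 7) := by
            rw [Real.exp_add, Real.exp_log (by norm_num), hx]; ring
        _ ≤ _ := Real.exp_le_exp.mpr this
    have up : (n:ℝ) ≤ m * Real.log 7 + 2 := by
      apply Real.exp_le_exp.mp
      rw [Real.exp_add, ← exp_nat_eq]
      have : (0:ℝ) < 7^m := by positivity
      nlinarith
    have low : (m:ℝ) * Real.log 7 - 1 ≤ n := by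
      have : (m:ℝ) * Real.log 7 ≤ n + 1 := by
        apply Real.exp_le_exp.mp
        rw [Real.exp_add, ← exp_nat_eq]
        have := Real.exp_one_gt_d9
        have := Real.exp_pos (n:ℝ)
        nlinarith
      linarith
    have hc1 : ⌈(m:ℝ) * Real.log 7 - 1⌉₊ ≤ n := Nat.ceil_le.mpr low
    have hc2 : n ≤ ⌈(m:ℝ) * Real.log 7 - 1⌉₊ + 3 := by
      have := Nat.le_ceil ((m:ℝ) * Real.log 7 - 1)
      have h3 : (n:ℝ) ≤ (⌈(m:ℝ) * Real.log 7 - 1⌉₊ : ℝ) + 3 := by linarith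
      exact_mod_cast h3
    rw [Finset.mem_image]
    refine ⟨(m, n - ⌈(m:ℝ) * Real.log 7 - 1⌉₊), ?_, ?_⟩
    · rw [Finset.mem_product, Finset.mem_Icc, Finset.mem_range]
      exact ⟨⟨hm, Nat.le_floor hml.le⟩, by simp only; omega⟩
    · simp only [Prod.mk.injEq, and_true]; omega

lemma upF_card (l : ℝ) (hl : (30000:ℝ)^4 ≤ l) : ((upF l).card : ℝ) ≤ l^2 / Real.log 7 + 11 * l := by
  have hl1 : 1 ≤ l := le_trans (by norm_num) hl
  have h7 := log7_ge
  have hc : (upF l).card ≤ ⌊l + 3⌋₊ * ⌊l / Real.log 7 + 1⌋₊ + ⌊l⌋₊ * 4 := by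
    unfold upF
    refine (Finset.card_union_le _ _).trans (add_le_add ?_ (Finset.card_image_le.trans ?_)) <;>
    simp
  have hc' : ((upF l).card : ℝ) ≤ (⌊l + 3⌋₊ : ℝ) * ⌊l / Real.log 7 + 1⌋₊ + ⌊l⌋₊ * 4 := by exact_mod_cast hc
  refine hc'.trans ?_
  have hd0 : 0 ≤ l / Real.log 7 := by positivity
  have hd : l / Real.log 7 ≤ l := div_le_self (by linarith) h7
  have f1 : (⌊l + 3⌋₊ : ℝ) ≤ l + 3 := Nat.floor_le (by linarith)
  have f2 : (⌊l / Real.log 7 + 1⌋₊ : ℝ) ≤ l / Real.log 7 + 1 := Nat.floor_le (by linarith)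
  have f3 : (⌊l⌋₊ : ℝ) ≤ l := Nat.floor_le (by linarith)
  calc (⌊l + 3⌋₊ : ℝ) * ⌊l / Real.log 7 + 1⌋₊ + ⌊l⌋₊ * 4 ≤ (l+3) * (l / Real.log 7 + 1) + l * 4 := by gcongr
    _ = l^2 / Real.log 7 + (l + 3 * (l / Real.log 7) + 3 + 4 * l) := by ring
    _ ≤ _ := by linarith

lemma low_sub (x l : ℝ) (hl : (30000:ℝ)^4 ≤ l) (hx : x = Real.exp l) :
    ((Finset.Icc 1 ⌊l - 1⌋₊ ×ˢ Finset.Icc 1 ⌊l / Real.log 7 - 1⌋₊ : Finset (ℕ × ℕ)) : Set (ℕ × ℕ)) ⊆ SS x := by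
  have hl1 : 100 ≤ l := le_trans (by norm_num) hl
  have h7 := log7_ge
  have h72 := log7_lt
  rintro ⟨n, m⟩ h
  rw [Finset.mem_coe, Finset.mem_product, Finset.mem_Icc, Finset.mem_Icc] at h
  obtain ⟨⟨hn, hn'⟩, hm, hm'⟩ := h
  simp only at hn hn' hm hm'
  refine ⟨hn, hm, ?_⟩
  have hd : 10 ≤ l / Real.log 7 := by
    rw [le_div_iff₀ (by linarith)]; linarith
  have n1 : (n:ℝ) ≤ l - 1 := (Nat.le_floor_iff (by linarith)).mp hn'
  have m1 : (m:ℝ) ≤ l / Real.log 7 - 1 := (Nat.le_floor_iff (by linarith)).mp hm'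
  have hpi := pi_pow_le m
  have hsq := sqrt5_pow_le n
  have h5pos : 0 ≤ Real.sqrt 5 ^ n := by positivity
  have hpipos : 0 ≤ Real.pi ^ m := by positivity
  have h7pos : (0:ℝ) ≤ 7 ^ m := by positivity
  have hEpos := Real.exp_pos (n:ℝ)
  have a1 : 2 * Real.exp n ≤ x := by
    have : Real.exp (n + 1) ≤ x := by rw [hx]; exact Real.exp_le_exp.mpr (by linarith)
    rw [Real.exp_add] at this
    nlinarith [Real.exp_one_gt_d9]
  have a2 : 2 * (7:ℝ)^m ≤ x := by
    have : (m:ℝ) * Real.log 7 + 1 ≤ l := by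
      have : (m:ℝ) * Real.log 7 ≤ (l / Real.log 7 - 1) * Real.log 7 := by gcongr
      have e : (l / Real.log 7 - 1) * Real.log 7 = l - Real.log 7 := by field_simp
      linarith
    have : Real.exp (m * Real.log 7 + 1) ≤ x := by rw [hx]; exact Real.exp_le_exp.mpr this
    rw [Real.exp_add, ← exp_nat_eq] at this
    nlinarith [Real.exp_one_gt_d9]
  simp only
  rw [abs_le]
  constructor <;> linarith

lemma low_card (l : ℝ) (hl : (30000:ℝ)^4 ≤ l) : l^2 / Real.log 7 - 11 * l ≤
    ((Finset.Icc 1 ⌊l - 1⌋₊ ×ˢ Finset.Icc 1 ⌊l / Real.log 7 - 1⌋₊ : Finset (ℕ × ℕ)).card : ℝ) := by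
  have hl1 : 100 ≤ l := le_trans (by norm_num) hl
  have h7 := log7_ge
  have h72 := log7_lt
  have hd : 10 ≤ l / Real.log 7 := by
    rw [le_div_iff₀ (by linarith)]; linarith
  have hd' : l / Real.log 7 ≤ l := div_le_self (by linarith) h7
  rw [Finset.card_product, Nat.card_Icc, Nat.card_Icc, Nat.add_sub_cancel, Nat.add_sub_cancel]
  push_cast
  have f1 := Nat.lt_floor_add_one (l - 1)
  have f2 := Nat.lt_floor_add_one (l / Real.log 7 - 1)
  calc l^2 / Real.log 7 - 11 * l ≤ (l - 2) * (l / Real.log 7 - 2) := by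
        have : l^2 / Real.log 7 = l * (l / Real.log 7) := by ring
        rw [this]; nlinarith
    _ ≤ _ := mul_le_mul (by linarith) (by linarith) (by linarith) (by positivity)

theorem stmt_13 :
    ∃ C : ℝ, 0 < C ∧ ∃ x₀ : ℝ, Real.exp 1 < x₀ ∧ ∀ x : ℝ, x₀ ≤ x →
      {q : ℕ × ℕ | 1 ≤ q.1 ∧ 1 ≤ q.2 ∧
        |Real.exp q.1 + Real.sqrt 5 ^ q.1 - 7 ^ q.2 - Real.pi ^ q.2| ≤ x}.Finite ∧
      (Real.log x) ^ 2 / Real.log 7 - C * Real.log x ≤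
        ({q : ℕ × ℕ | 1 ≤ q.1 ∧ 1 ≤ q.2 ∧
          |Real.exp q.1 + Real.sqrt 5 ^ q.1 - 7 ^ q.2 - Real.pi ^ q.2| ≤ x}.ncard : ℝ) ∧
      ({q : ℕ × ℕ | 1 ≤ q.1 ∧ 1 ≤ q.2 ∧
          |Real.exp q.1 + Real.sqrt 5 ^ q.1 - 7 ^ q.2 - Real.pi ^ q.2| ≤ x}.ncard : ℝ) ≤
        (Real.log x) ^ 2 / Real.log 7 + C * Real.log x * Real.log (Real.log x) := by
  refine ⟨11, by norm_num, Real.exp (30000^4), Real.exp_lt_exp.mpr (by norm_num), ?_⟩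
  intro x hx
  have hxpos : 0 < x := (Real.exp_pos _).trans_le hx
  have hl : (30000:ℝ)^4 ≤ Real.log x := (Real.le_log_iff_exp_le hxpos).mpr hx
  have hxl : x = Real.exp (Real.log x) := (Real.exp_log hxpos).symm
  have hsub := SS_sub x _ hl hxl
  have hfin : (SS x).Finite := (upF (Real.log x)).finite_toSet.subset hsub
  have hll : 1 ≤ Real.log (Real.log x) := by
    rw [Real.le_log_iff_exp_le (lt_of_lt_of_le (by norm_num) hl)]
    have := Real.exp_one_lt_d9
    norm_num at hl
    linarith
  have hlpos : 0 ≤ Real.log x := le_trans (by norm_num) hl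
  refine ⟨hfin, ?_, ?_⟩
  · have h1 := Set.ncard_le_ncard (low_sub x _ hl hxl) hfin
    rw [Set.ncard_coe_finset] at h1
    exact (low_card _ hl).trans (Nat.cast_le.mpr h1)
  · have h1 := Set.ncard_le_ncard hsub (upF (Real.log x)).finite_toSet
    rw [Set.ncard_coe_finset] at h1
    have h2 : ((SS x).ncard : ℝ) ≤ ((upF (Real.log x)).card : ℝ) := by exact_mod_cast h1
    refine h2.trans ((upF_card _ hl).trans ?_)
    nlinarith
end

section
/- Let α, β be real numbers with α > 1 and β > 1, let x ≥ 0 be real, and let n, m be positive integers. If |α^n − β^m| ≤ x and α^n > 2x, then |log α / log β − m/n| ≤ 2x / (log β · n · α^n). -/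
theorem stmt_14 (α β x : ℝ) (hα : 1 < α) (hβ : 1 < β) (hx : 0 ≤ x)
    (n m : ℕ) (hn : 0 < n) (hm : 0 < m)
    (h1 : |α ^ n - β ^ m| ≤ x) (h2 : 2 * x < α ^ n) :
    |Real.log α / Real.log β - (m : ℝ) / (n : ℝ)| ≤
      2 * x / (Real.log β * n * α ^ n) := by
  have hn' : (0 : ℝ) < n := by exact_mod_cast hn
  have hL : 0 < Real.log β := Real.log_pos hβ
  have hA : 0 < α ^ n := by positivity
  have hB : 0 < β ^ m := by positivity
  have key : |n * Real.log α - m * Real.log β| ≤ 2 * x / α ^ n := by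
    rw [← Real.log_pow, ← Real.log_pow]
    generalize α ^ n = A at *
    generalize β ^ m = B at *
    obtain ⟨h3, h4⟩ := abs_le.mp h1
    rw [abs_le]
    constructor
    · have h := Real.log_le_sub_one_of_pos (div_pos hB hA)
      rw [Real.log_div hB.ne' hA.ne'] at h
      have : B / A - 1 ≤ 2 * x / A := by
        rw [div_sub_one hA.ne']
        gcongr
        linarith
      linarith
    · have h := Real.log_le_sub_one_of_pos (div_pos hA hB)
      rw [Real.log_div hA.ne' hB.ne'] at h
      have : A / B - 1 ≤ 2 * x / A := by
        rw [div_sub_one hB.ne', div_le_div_iff₀ hB hA]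
        nlinarith
      linarith
  have e : Real.log α / Real.log β - (m : ℝ) / (n : ℝ)
      = (n * Real.log α - m * Real.log β) / (Real.log β * n) := by
    field_simp
  have e2 : 2 * x / (Real.log β * n * α ^ n) = 2 * x / α ^ n / (Real.log β * n) := by
    field_simp
  rw [e, e2, abs_div, abs_of_pos (mul_pos hL hn')]
  gcongr
end

section
/- Let n and m be positive integers and let x be a real number. Suppose that e^n ≤ 7^m, that x < max{(√5)^n, π^m}, and that |e^n + (√5)^n − 7^m − π^m| ≤ x (all quantities real). Then |e^n / 7^m − 1| ≤ 4 · (0.83)^n. -/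
theorem stmt_15 (n m : ℕ) (hn : 0 < n) (hm : 0 < m) (x : ℝ)
    (h1 : Real.exp n ≤ 7 ^ m)
    (h2 : x < max (Real.sqrt 5 ^ n) (Real.pi ^ m))
    (h3 : |Real.exp n + Real.sqrt 5 ^ n - 7 ^ m - Real.pi ^ m| ≤ x) :
    |Real.exp n / 7 ^ m - 1| ≤ 4 * (0.83 : ℝ) ^ n := by
  have hs : Real.sqrt 5 ≤ 0.83 * Real.exp 1 := by
    have h5 : Real.sqrt 5 ≤ 2.25 := by
      rw [Real.sqrt_le_left (by norm_num)]
      norm_num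
    have := Real.exp_one_gt_d9
    linarith
  have hB : Real.sqrt 5 ^ n ≤ (0.83 : ℝ) ^ n * Real.exp n := by
    rw [← Real.exp_one_pow n, ← mul_pow]
    exact pow_le_pow_left₀ (Real.sqrt_nonneg 5) hs n
  have hC : (0 : ℝ) < 7 ^ m := by positivity
  have hB0 : (0 : ℝ) ≤ Real.sqrt 5 ^ n := by positivity
  have hD0 : (0 : ℝ) < Real.pi ^ m := pow_pos Real.pi_pos m
  have h83 : (0 : ℝ) < (0.83 : ℝ) ^ n := by positivity
  have hS := (abs_le.mp h3).1
  have hCA : 7 ^ m - Real.exp n ≤ 2 * Real.sqrt 5 ^ n := by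
    rcases lt_max_iff.mp h2 with h | h <;> linarith
  have hmul : (0.83 : ℝ) ^ n * Real.exp n ≤ (0.83 : ℝ) ^ n * 7 ^ m :=
    mul_le_mul_of_nonneg_left h1 h83.le
  have hp : 0 < (0.83 : ℝ) ^ n * 7 ^ m := mul_pos h83 hC
  have hq : Real.exp n / 7 ^ m ≤ 1 := (div_le_one hC).mpr h1
  rw [abs_of_nonpos (by linarith)]
  have : 1 - 4 * (0.83 : ℝ) ^ n ≤ Real.exp n / 7 ^ m := by
    rw [le_div_iff₀ hC]
    linarith
  linarith
end
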